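/- arXiv:2409.09535 — 2 statements merged into one kernel-verified Lean document; each statement's English description precedes it below -/
import Mathlib

section
/- (Kronecker Canonical Form, existence.) For every m, n and every pencil (A,B) of m×n complex matrices there exist a finite index type ι and, for each i ∈ ι, a canonical block which is either a Jordan block E_{c_i}(μ_i) with μ_i ∈ ℂ ∪ {∞} and c_i ≥ 1, or a horizontal Kronecker block L_{h_i} with h_i ≥ 0, or a vertical Kronecker block L_{w_i}ᵀ with w_i ≥ 0, such that (A,B) is strictly equivalent to the block-diagonal pencil formed by these blocks. -/
/-!
The theorem is proved for pairs of linear maps `A, B : V → W` between finite-dimensional spaces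
(`hasBlocks`); matrices are recovered by base change. Everything rests on one reduction step,
`HasBlocks.extend`. Given `C, D : V → W`, put `W' = range C` and `V' = D⁻¹(W')`. Both maps send `V'`
into `W'`, and block bases of the restricted pencil extend to block bases of the whole one. Indeed,
a basis vector `e` of `W'` missed by `C` on `V'` is `C x` for some `x`; adjoining `x` to `V'` and `D
x` to `W'` makes the block of `e` longer by one. The space `V` is completed by vectors `y ∈ ker C`,
each giving with `D y` a new block `C = 0`, `D = 1` of size `1 × 1`, and `W` is completed by vectors
outside `range D`, each giving a block `L_0ᵀ`. The new vectors stay independent because `D` induces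
an injection `V / V' → W / W'`. For this the canonical blocks need only satisfy: at most one row is
missed, and lengthening at that row gives a canonical block again (`exists_growth`).

If `B` is bijective, take an eigenvalue `μ` of `B⁻¹ A`. Then `C = A - μ B` is not surjective, and
the reduction with `D = B` decreases the dimension and keeps `B` bijective. Only blocks `E_c(ν)`
with `ν ∈ ℂ` arise (`hasBlocks_of_bijective`, the Jordan normal form). If `B` is not surjective, the
reduction with `C = B`, `D = A` decreases the dimension: `E_c(∞)` and `L_wᵀ` grow, while `E_c(μ)`
and `L_h` do not, since `B` is onto there. If `B` is not injective, its dual map is not surjective,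
so the dual pencil is decomposed by that reduction and the result is transposed
(`HasBlocks.of_dualMap`).
-/

open Matrix

noncomputable section

/-- The `k × k` Jordan block `J_k(μ)`: `μ` on the diagonal, `1` on the superdiagonal. -/
def Jmat (k : ℕ) (μ : ℂ) : Matrix (Fin k) (Fin k) ℂ :=
  Matrix.of fun i j => if (j : ℕ) = (i : ℕ) then μ else if (j : ℕ) = (i : ℕ) + 1 then 1 else 0

/-- The `k × (k+1)` matrix `F_k` with `1` in the entries `(i, i+1)`. -/
def Fmat (k : ℕ) : Matrix (Fin k) (Fin (k + 1)) ℂ :=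
  Matrix.of fun i j => if (j : ℕ) = (i : ℕ) + 1 then 1 else 0

/-- The `k × (k+1)` matrix `G_k` with `1` in the entries `(i, i)`. -/
def Gmat (k : ℕ) : Matrix (Fin k) (Fin (k + 1)) ℂ :=
  Matrix.of fun i j => if (j : ℕ) = (i : ℕ) then 1 else 0

/-- Data of a canonical block of the Kronecker canonical form: a Jordan block
`E_c(μ)` with `μ ∈ ℂ ∪ {∞}` (`none` is `∞`), a horizontal Kronecker block `L_h`,
or a vertical Kronecker block `L_wᵀ`. -/
inductive CanBlockData : Type
  | jordan (c : ℕ) (μ : Option ℂ)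
  | horiz (h : ℕ)
  | vert (w : ℕ)

/-- The admissibility condition on a canonical block: Jordan blocks have size `c ≥ 1`. -/
def CanBlockData.ok : CanBlockData → Prop
  | .jordan c _ => 1 ≤ c
  | .horiz _ => True
  | .vert _ => True

/-- Number of rows of a canonical block. -/
def CanBlockData.rows : CanBlockData → ℕ
  | .jordan c _ => c
  | .horiz h => h
  | .vert w => w + 1

/-- Number of columns of a canonical block. -/
def CanBlockData.cols : CanBlockData → ℕ
  | .jordan c _ => c
  | .horiz h => h + 1
  | .vert w => w

/-- The `A`-part of a canonical block. -/
def CanBlockData.Amat : (b : CanBlockData) → Matrix (Fin b.rows) (Fin b.cols) ℂ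
  | .jordan c (some μ) => Jmat c μ
  | .jordan c none => (1 : Matrix (Fin c) (Fin c) ℂ)
  | .horiz h => Fmat h
  | .vert w => (Fmat w)ᵀ

/-- The `B`-part of a canonical block. -/
def CanBlockData.Bmat : (b : CanBlockData) → Matrix (Fin b.rows) (Fin b.cols) ℂ
  | .jordan c (some _) => (1 : Matrix (Fin c) (Fin c) ℂ)
  | .jordan c none => Jmat c 0
  | .horiz h => Gmat h
  | .vert w => (Gmat w)ᵀ

section Helpers

open Module

/-! ### Extending bases -/

/-- A linearly independent family together with a set spanning the rest extends to a basis
by vectors of that set. -/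
lemma exists_basis_sum {Q N : Type} [AddCommGroup Q] [Module ℂ Q] [FiniteDimensional ℂ Q]
    (v : N → Q) (hv : LinearIndependent ℂ v) (t : Set Q)
    (ht : Submodule.span ℂ (Set.range v ∪ t) = ⊤) :
    ∃ (J : Type) (_ : Finite J) (y : J → Q), (∀ j, y j ∈ t) ∧
      ∃ b : Basis (N ⊕ J) ℂ Q, ⇑b = Sum.elim v y := by
  classical
  have hs := hv.linearIndepOn_id
  have hst : Set.range v ⊆ Set.range v ∪ t := Set.subset_union_left
  let b := Basis.extendLe hs hst ht.ge
  have hsub : Set.range v ⊆ hs.extend hst := hs.subset_extend hst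
  let e : N ⊕ ↥(hs.extend hst \ Set.range v) ≃ hs.extend hst :=
    (Equiv.sumCongr (Equiv.ofInjective v hv.injective) (Equiv.refl _)).trans
      (Equiv.Set.sumDiffSubset hsub)
  have : Finite (hs.extend hst) := Module.Finite.finite_basis b
  refine ⟨↥(hs.extend hst \ Set.range v), Finite.Set.subset (hs.extend hst) Set.sdiff_subset,
    fun j => j.1, fun j => ?_, b.reindex e.symm, ?_⟩
  · exact (hs.extend_subset hst j.2.1).resolve_left j.2.2
  · funext p
    rcases p with n | j <;> simp [b, e]

/-- A basis of a subspace `V'` and a family `x` that is independent modulo `V'` extend to a basis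
of `V` by vectors of a prescribed set `t`, provided that `V'`, `x` and `t` span. -/
lemma exists_basis_mod {V I N : Type} [AddCommGroup V] [Module ℂ V] [FiniteDimensional ℂ V]
    (V' : Submodule ℂ V) (b : Basis I ℂ V') (x : N → V)
    (hx : LinearIndependent ℂ (V'.mkQ ∘ x)) (t : Set V)
    (ht : V' ⊔ Submodule.span ℂ (Set.range x ∪ t) = ⊤) :
    ∃ (J : Type) (_ : Finite J) (y : J → V), (∀ j, y j ∈ t) ∧
      LinearIndependent ℂ (V'.mkQ ∘ Sum.elim x y) ∧
      ∃ c : Basis (I ⊕ (N ⊕ J)) ℂ V, (∀ i, c (.inl i) = b i) ∧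
        (∀ n, c (.inr (.inl n)) = x n) ∧ (∀ j, c (.inr (.inr j)) = y j) := by
  obtain ⟨J, hJ, yb, hyb, bQ, hbQ⟩ := exists_basis_sum (V'.mkQ ∘ x) hx (V'.mkQ '' t) (by
    rw [Set.range_comp, ← Set.image_union, ← Submodule.map_span]
    have := congrArg (Submodule.map V'.mkQ) ht
    rw [Submodule.map_sup, Submodule.map_top, Submodule.range_mkQ] at this
    simpa using this)
  choose y hyt hy using hyb
  have hli : V'.mkQ ∘ Sum.elim x y = bQ := by
    rw [hbQ]; funext p; rcases p with n | j
    · rfl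
    · exact hy j
  refine ⟨J, hJ, y, hyt, hli ▸ bQ.linearIndependent, ?_⟩
  have hind : LinearIndependent ℂ (Sum.elim (fun i => (b i : V)) (Sum.elim x y)) :=
    LinearIndependent.sumElim_of_quotient b.linearIndependent _
      (by have := bQ.linearIndependent; rw [← hli] at this; exact this)
  have hsp : ⊤ ≤ Submodule.span ℂ (Set.range (Sum.elim (fun i => (b i : V)) (Sum.elim x y))) := by
    have h1 : V' ≤ Submodule.span ℂ (Set.range fun i => (b i : V)) := by
      rw [show (Set.range fun i => (b i : V)) = V'.subtype '' Set.range b by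
        rw [← Set.range_comp]; rfl, ← Submodule.map_span, b.span_eq]
      simp
    have h2 : V' ⊔ Submodule.span ℂ (Set.range (Sum.elim x y)) = ⊤ := by
      rw [← Submodule.map_mkQ_eq_top, Submodule.map_span, ← Set.range_comp, hli, bQ.span_eq]
    rw [Set.Sum.elim_range, Submodule.span_union, ← h2]
    exact sup_le_sup_right h1 _
  refine ⟨Basis.mk hind hsp, ?_, ?_, ?_⟩ <;> intro <;> simp

/-- The linear algebra behind the reduction step. Let `W' = range C` and `V' = D⁻¹(W')`, with bases
`bV` and `bW`. The rows `f n` are those missed by `C` on `V'`; the other basis vectors of `W'` have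
preimages in `V'` (`h1`), and `C(V')` has no `f n`-component (`h2`). Then `V = V' ⊕ ⟨x⟩ ⊕ ⟨y⟩` with
`C (x n) = bW (f n)` and `y j ∈ ker C`, and `W = W' ⊕ ⟨D x⟩ ⊕ ⟨D y⟩ ⊕ ⟨z⟩` with no `z l` in the
range of `D`. -/
lemma exists_extended_bases {V W I R N : Type} [AddCommGroup V] [Module ℂ V]
    [FiniteDimensional ℂ V] [AddCommGroup W] [Module ℂ W] [FiniteDimensional ℂ W]
    [Finite N] (C D : V →ₗ[ℂ] W) (V' : Submodule ℂ V) (W' : Submodule ℂ W)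
    (hW' : W' = LinearMap.range C) (hV' : V' = W'.comap D)
    (bV : Basis I ℂ V') (bW : Basis R ℂ W')
    (f : N → R) (hf : Function.Injective f)
    (h1 : ∀ r ∉ Set.range f, ∃ v ∈ V', C v = bW r)
    (h2 : ∀ v ∈ V', ∀ w : W', (w : W) = C v → ∀ n, bW.repr w (f n) = 0) :
    ∃ (J L : Type) (_ : Finite J) (_ : Finite L)
      (cV : Basis (I ⊕ (N ⊕ J)) ℂ V) (cW : Basis (R ⊕ (N ⊕ (J ⊕ L))) ℂ W),
      (∀ i, cV (.inl i) = bV i) ∧ (∀ r, cW (.inl r) = bW r) ∧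
      (∀ n, C (cV (.inr (.inl n))) = bW (f n)) ∧ (∀ j, C (cV (.inr (.inr j))) = 0) ∧
      (∀ n, D (cV (.inr (.inl n))) = cW (.inr (.inl n))) ∧
      (∀ j, D (cV (.inr (.inr j))) = cW (.inr (.inr (.inl j)))) ∧
      (∀ l, cW (.inr (.inr (.inr l))) ∉ LinearMap.range D) := by
  classical
  have := Fintype.ofFinite N
  have hCW : ∀ w : W', ∃ v, C v = w := fun w => hW'.le w.2
  choose x hx using fun n => hCW (bW (f n))
  -- a combination of `x` in `V'` is mapped by `C` into `C(V')`, which has no `f n`-component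
  have hxi : LinearIndependent ℂ (V'.mkQ ∘ x) := by
    rw [Fintype.linearIndependent_iff]
    intro a ha n
    have hmem : ∑ n, a n • x n ∈ V' := by
      rw [← Submodule.Quotient.mk_eq_zero, ← Submodule.mkQ_apply, map_sum]
      simpa using ha
    have := h2 _ hmem (∑ n, a n • bW (f n)) (by simp [hx]) n
    simpa [Finsupp.single_apply, hf.eq_iff] using this
  -- every vector of `V` is a sum of one in `V'`, one in the span of `x`, one in `ker C`
  have hspan : V' ⊔ Submodule.span ℂ (Set.range x ∪ (LinearMap.ker C : Set V)) = ⊤ := by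
    set S := V' ⊔ Submodule.span ℂ (Set.range x ∪ (LinearMap.ker C : Set V)) with hS
    have hker : LinearMap.ker C ≤ S := fun v hv =>
      Submodule.mem_sup_right (Submodule.subset_span (Or.inr hv))
    have hr : ∀ r, (bW r : W) ∈ S.map C := by
      intro r
      by_cases h : r ∈ Set.range f
      · obtain ⟨n, rfl⟩ := h
        exact ⟨x n, Submodule.mem_sup_right (Submodule.subset_span (Or.inl ⟨n, rfl⟩)), hx n⟩
      · obtain ⟨v, hv, hvr⟩ := h1 r h
        exact ⟨v, Submodule.mem_sup_left hv, hvr⟩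
    have hle : W' ≤ S.map C := by
      have : Submodule.span ℂ (Set.range fun r => (bW r : W)) ≤ S.map C := by
        rw [Submodule.span_le]; rintro _ ⟨r, rfl⟩; exact hr r
      refine le_trans ?_ this
      rw [show (Set.range fun i => (bW i : W)) = W'.subtype '' Set.range bW by
        rw [← Set.range_comp]; rfl, ← Submodule.map_span, bW.span_eq]
      simp
    rw [eq_top_iff]
    intro v _
    obtain ⟨s, hs, hsv⟩ := hle (hW' ▸ ⟨v, rfl⟩ : C v ∈ W')
    have : v - s ∈ S := hker (by simp [hsv])
    simpa using S.add_mem this hs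
  obtain ⟨J, hJ, y, hy, hxy, cV, c1, c2, c3⟩ := exists_basis_mod V' bV x hxi _ hspan
  -- `D` induces an injection `V / V' → W / W'` because `V'` is the full preimage of `W'`
  have hDi : LinearIndependent ℂ (W'.mkQ ∘ (D ∘ Sum.elim x y)) := by
    have hk : LinearMap.ker (V'.mapQ W' D hV'.le) = ⊥ := by
      rw [Submodule.mapQ, Submodule.ker_liftQ, LinearMap.ker_comp, Submodule.ker_mkQ, ← hV']
      simp
    have := hxy.map' _ hk
    exact this
  obtain ⟨L, hL, z, hz, -, cW, d1, d2, d3⟩ := exists_basis_mod W' bW (D ∘ Sum.elim x y) hDi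
    ((LinearMap.range D : Set W)ᶜ) (by
      rw [eq_top_iff]
      intro w _
      by_cases hw : w ∈ LinearMap.range D
      · obtain ⟨v, rfl⟩ := hw
        have hv : v ∈ Submodule.span ℂ (Set.range cV) := cV.span_eq ▸ Submodule.mem_top
        induction hv using Submodule.span_induction with
        | mem v h =>
          obtain ⟨p, rfl⟩ := h
          rcases p with i | n | j
          · rw [c1]; exact Submodule.mem_sup_left (hV'.le (bV i).2)
          · rw [c2]
            exact Submodule.mem_sup_right (Submodule.subset_span (Or.inl ⟨.inl n, rfl⟩))
          · rw [c3]
            exact Submodule.mem_sup_right (Submodule.subset_span (Or.inl ⟨.inr j, rfl⟩))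
        | zero => simp
        | add a b _ _ ha hb => rw [map_add]; exact add_mem (ha trivial) (hb trivial)
        | smul c a _ ha => rw [map_smul]; exact Submodule.smul_mem _ _ (ha trivial)
      · exact Submodule.mem_sup_right (Submodule.subset_span (Or.inr hw)))
  refine ⟨J, L, hJ, hL, cV, cW.reindex ((Equiv.refl R).sumCongr (Equiv.sumAssoc N J L)),
    c1, fun r => by simp [d1], fun n => by rw [c2, hx], fun j => ?_, fun n => ?_, fun j => ?_,
    fun l => ?_⟩
  · rw [c3]; exact hy j
  · rw [c2]; simp [d2]
  · rw [c3]; simp [d2]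
  · simpa [d3] using hz l

/-! ### The reduction step -/

/-- The pair of maps `C, D : V → W` is a direct sum of canonical blocks, all satisfying `ok`: in
suitable bases of `V` and `W`, indexed by a block and a column (row) of that block, `C` and `D` are
block diagonal with blocks `X b` and `Y b`. Here `X, Y` will be `Amat, Bmat` in one order or the
other, so that the two members of the pencil can exchange roles. -/
def HasBlocks (ok : CanBlockData → Prop)
    (X Y : ∀ b : CanBlockData, Matrix (Fin b.rows) (Fin b.cols) ℂ)
    {V W : Type} [AddCommGroup V] [Module ℂ V] [AddCommGroup W] [Module ℂ W]
    (C D : V →ₗ[ℂ] W) : Prop :=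
  ∃ (ι : Type) (_ : Finite ι) (bl : ι → CanBlockData) (_ : ∀ i, ok (bl i))
    (bV : Basis (Σ i, Fin (bl i).cols) ℂ V) (bW : Basis (Σ i, Fin (bl i).rows) ℂ W),
    (∀ i j, C (bV ⟨i, j⟩) = ∑ k, X (bl i) k j • bW ⟨i, k⟩) ∧
    (∀ i j, D (bV ⟨i, j⟩) = ∑ k, Y (bl i) k j • bW ⟨i, k⟩)

/-- How a block `b` of the restriction of `(C, D)` to `V' = D⁻¹(range C)`, `W' = range C` changes on
passing back to the whole space. `X b` and `Y b` are the matrices of `C` and `D` on the block. The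
rows `f m` are the ones missed by `X b`: the rows of `X b` at `f m` vanish, and all other unit
vectors are in the range of `X b`. The block `grown` has `size` new columns and rows; `C` maps the
`m`-th new column to row `f m`, and `D` maps it to the `m`-th new row. (For canonical blocks `size ≤
1`.) -/
structure Growth (X Y : ∀ b : CanBlockData, Matrix (Fin b.rows) (Fin b.cols) ℂ)
    (b : CanBlockData) where
  grown : CanBlockData
  size : ℕ
  f : Fin size → Fin b.rows
  f_inj : Function.Injective f
  eR : Fin grown.rows ≃ Fin b.rows ⊕ Fin size
  eC : Fin grown.cols ≃ Fin b.cols ⊕ Fin size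
  hX : ∀ r c, X grown (eR.symm r) (eC.symm c) =
    fromBlocks (X b) (of fun r m => if r = f m then 1 else 0) 0 0 r c
  hY : ∀ r c, Y grown (eR.symm r) (eC.symm c) = fromBlocks (Y b) 0 0 1 r c
  surj : ∀ r ∉ Set.range f, ∃ x, X b *ᵥ x = Pi.single r 1
  zero : ∀ m j, X b (f m) j = 0

/-- Bookkeeping of indices: blocks `T (inl i)` consisting of an old part `K i` and a new part `M i`,
together with further blocks of total index type `J'`. -/
lemma exists_sigma_equiv {ι J J' : Type} {T : ι ⊕ J → Type} {K M : ι → Type}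
    (e : ∀ i, T (.inl i) ≃ K i ⊕ M i) (u : (Σ j, T (.inr j)) ≃ J') :
    ∃ φ : (Σ i, K i) ⊕ ((Σ i, M i) ⊕ J') ≃ (Σ i, T i),
      (∀ i k, φ (.inl ⟨i, k⟩) = ⟨.inl i, (e i).symm (.inl k)⟩) ∧
      (∀ i m, φ (.inr (.inl ⟨i, m⟩)) = ⟨.inl i, (e i).symm (.inr m)⟩) ∧
      (∀ j, φ (.inr (.inr j)) = ⟨.inr (u.symm j).1, (u.symm j).2⟩) :=
  ⟨((Equiv.sumSigmaDistrib T).trans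
    ((((Equiv.sigmaCongrRight e).trans (Equiv.sigmaSumDistrib K M)).sumCongr u).trans
      (Equiv.sumAssoc _ _ _))).symm, fun _ _ => rfl, fun _ _ => rfl, fun _ => rfl⟩

/-- The reduction step: a decomposition of `(C, D)` restricted to `V' = D⁻¹(range C) → range C`
yields one of `(C, D)`. Old blocks grow according to `Growth`, each further vector `y ∈ ker C` gives
a `1 × 1` block `b₁` with `C = 0`, `D = 1`, and each vector of `W` outside the range of `D` gives a
`1 × 0` block `b₀`; the latter do not occur if `D` is surjective. -/
lemma HasBlocks.extend {ok : CanBlockData → Prop}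
    {X Y : ∀ b : CanBlockData, Matrix (Fin b.rows) (Fin b.cols) ℂ}
    (grow : ∀ b, ok b → ∃ g : Growth X Y b, ok g.grown)
    (b₁ b₀ : CanBlockData) (ok₁ : ok b₁)
    [Unique (Fin b₁.rows)] [Unique (Fin b₁.cols)] [Unique (Fin b₀.rows)] [IsEmpty (Fin b₀.cols)]
    (hX₁ : X b₁ = 0) (hY₁ : ∀ r c, Y b₁ r c = 1)
    {V W : Type} [AddCommGroup V] [Module ℂ V] [FiniteDimensional ℂ V]
    [AddCommGroup W] [Module ℂ W] [FiniteDimensional ℂ W]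
    (C D : V →ₗ[ℂ] W) (V' : Submodule ℂ V) (W' : Submodule ℂ W)
    (hW' : W' = LinearMap.range C) (hV' : V' = W'.comap D)
    (ok₀ : Function.Surjective D ∨ ok b₀)
    (hC : ∀ v ∈ V', C v ∈ W') (hD : ∀ v ∈ V', D v ∈ W')
    (h : HasBlocks ok X Y (C.restrict hC) (D.restrict hD)) :
    HasBlocks ok X Y C D := by
  classical
  obtain ⟨ι, hι, bl, hok, bV, bW, hCb, hDb⟩ := h
  choose g hg using fun i => grow (bl i) (hok i)
  have hCb' : ∀ i j, C (bV ⟨i, j⟩) = ∑ k, X (bl i) k j • (bW ⟨i, k⟩ : W) := fun i j => by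
    have := congrArg Subtype.val (hCb i j)
    simpa using this
  have hDb' : ∀ i j, D (bV ⟨i, j⟩) = ∑ k, Y (bl i) k j • (bW ⟨i, k⟩ : W) := fun i j => by
    have := congrArg Subtype.val (hDb i j)
    simpa using this
  let F : (Σ i, Fin (g i).size) → Σ i, Fin (bl i).rows := fun p => ⟨p.1, (g p.1).f p.2⟩
  have hF : Function.Injective F := by
    rintro ⟨i, m⟩ ⟨i', m'⟩ h
    obtain ⟨h₁, h₂⟩ := Sigma.mk.inj_iff.1 h
    obtain rfl : i = i' := h₁
    exact congrArg (Sigma.mk i) ((g i).f_inj (eq_of_heq h₂))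
  obtain ⟨J, L, hJ, hL, cV, cW, c1, d1, e1, e2, e3, e4, e5⟩ :=
    exists_extended_bases C D V' W' hW' hV' bV bW F hF
    (by
      rintro ⟨i, k⟩ hk
      obtain ⟨x, hx⟩ := (g i).surj k (by
        rintro ⟨m, rfl⟩; exact hk ⟨⟨i, m⟩, rfl⟩)
      refine ⟨∑ j, x j • (bV ⟨i, j⟩ : V), Submodule.sum_mem _ fun j _ =>
        V'.smul_mem _ (bV ⟨i, j⟩).2, ?_⟩
      have hx' : ∀ k', ∑ j, x j * X (bl i) k' j = (Pi.single k 1 : _ → ℂ) k' := fun k' => by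
        rw [← hx]; simp [mulVec, dotProduct, mul_comm]
      simp only [map_sum, map_smul, hCb', Finset.smul_sum, smul_smul]
      rw [Finset.sum_comm]
      simp only [← Finset.sum_smul, hx', Pi.single_apply]
      simp)
    (by
      intro v hv w hw n
      have hz : (bW.coord (F n)) ∘ₗ (C.restrict hC) = 0 := by
        refine bV.ext ?_
        rintro ⟨i', j⟩
        obtain ⟨i, m⟩ := n
        simp only [LinearMap.comp_apply, hCb, map_sum, map_smul, LinearMap.zero_apply]
        refine Finset.sum_eq_zero fun k _ => ?_
        rw [Basis.coord_apply, Basis.repr_self, Finsupp.single_apply]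
        split_ifs with h
        · obtain ⟨rfl, h⟩ := Sigma.mk.inj_iff.1 h
          rw [eq_of_heq h, (g i').zero, zero_smul]
        · simp
      have := LinearMap.congr_fun hz ⟨v, hv⟩
      rw [show w = C.restrict hC ⟨v, hv⟩ from Subtype.ext hw]
      exact this)
  -- the new blocks: grown old ones, `b₁` for every `y j`, `b₀` for every `z l`
  let bl' : ι ⊕ (J ⊕ L) → CanBlockData :=
    Sum.elim (fun i => (g i).grown) (Sum.elim (fun _ => b₁) (fun _ => b₀))
  have : IsEmpty (Σ _ : L, Fin b₀.cols) := ⟨fun p => isEmptyElim p.2⟩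
  let uC : (Σ j : J ⊕ L, Fin (bl' (.inr j)).cols) ≃ J :=
    (Equiv.sumSigmaDistrib _).trans (((Equiv.sigmaUnique J fun _ => Fin b₁.cols).sumCongr
      (Equiv.equivOfIsEmpty (Σ _ : L, Fin b₀.cols) Empty)).trans (Equiv.sumEmpty J Empty))
  let uR : (Σ j : J ⊕ L, Fin (bl' (.inr j)).rows) ≃ J ⊕ L :=
    (Equiv.sumSigmaDistrib _).trans ((Equiv.sigmaUnique J fun _ => Fin b₁.rows).sumCongr
      (Equiv.sigmaUnique L fun _ => Fin b₀.rows))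
  obtain ⟨φ, p1, p2, p3⟩ := exists_sigma_equiv (T := fun i => Fin (bl' i).cols)
    (fun i => (g i).eC) uC
  obtain ⟨ψ, q1, q2, q3⟩ := exists_sigma_equiv (T := fun i => Fin (bl' i).rows)
    (fun i => (g i).eR) uR
  have hφ : ∀ a, cV.reindex φ (φ a) = cV a := fun a => by simp
  have hψ : ∀ a, cW.reindex ψ (ψ a) = cW a := fun a => by simp
  have hV1 : ∀ i k, cV.reindex φ ⟨.inl i, (g i).eC.symm (.inl k)⟩ = bV ⟨i, k⟩ := fun i k =>
    (congrArg _ (p1 i k).symm).trans ((hφ _).trans (c1 _))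
  have hV2 : ∀ i m, cV.reindex φ ⟨.inl i, (g i).eC.symm (.inr m)⟩ = cV (.inr (.inl ⟨i, m⟩)) :=
    fun i m => (congrArg _ (p2 i m).symm).trans (hφ _)
  have hV3 : ∀ j (c : Fin b₁.cols), cV.reindex φ ⟨.inr (.inl j), c⟩ = cV (.inr (.inr j)) :=
    fun j c => (congrArg _ ((p3 j).trans (by
      rw [Subsingleton.elim c default]; rfl)).symm).trans (hφ _)
  have hW1 : ∀ i k, cW.reindex ψ ⟨.inl i, (g i).eR.symm (.inl k)⟩ = bW ⟨i, k⟩ := fun i k =>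
    (congrArg _ (q1 i k).symm).trans ((hψ _).trans (d1 _))
  have hW2 : ∀ i m, cW.reindex ψ ⟨.inl i, (g i).eR.symm (.inr m)⟩ = cW (.inr (.inl ⟨i, m⟩)) :=
    fun i m => (congrArg _ (q2 i m).symm).trans (hψ _)
  have hW3 : ∀ j (c : Fin b₁.rows),
      cW.reindex ψ ⟨.inr (.inl j), c⟩ = cW (.inr (.inr (.inl j))) :=
    fun j c => (congrArg _ ((q3 (.inl j)).trans (by
      rw [Subsingleton.elim c default]; rfl)).symm).trans (hψ _)
  have hsum : ∀ i (a : Fin (g i).grown.rows → ℂ),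
      ∑ k, a k • cW.reindex ψ ⟨.inl i, k⟩ = ∑ k, a ((g i).eR.symm (.inl k)) • (bW ⟨i, k⟩ : W) +
        ∑ m, a ((g i).eR.symm (.inr m)) • cW (.inr (.inl ⟨i, m⟩)) := fun i a => by
    rw [← (g i).eR.symm.sum_comp, Fintype.sum_sum_type]
    simp only [hW1, hW2]
  refine ⟨ι ⊕ (J ⊕ L), inferInstance, bl', ?_, cV.reindex φ, cW.reindex ψ, ?_, ?_⟩
  · rintro (i | j | l)
    · exact hg i
    · exact ok₁
    · exact ok₀.resolve_left fun hs => e5 l (LinearMap.range_eq_top.2 hs ▸ Submodule.mem_top)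
  · rintro (i | j | l) c
    · refine Eq.trans ?_ (hsum i _).symm
      obtain ⟨c, rfl⟩ := (g i).eC.symm.surjective c
      rcases c with c | m
      · rw [hV1, hCb']
        simp [bl', (g i).hX]
      · rw [hV2, e1]
        simp [bl', (g i).hX, F]
    · rw [hV3 j c, e2]
      refine (Finset.sum_eq_zero fun k _ => ?_).symm
      exact (congrArg (· • _) (congrFun (congrFun hX₁ k) c)).trans (zero_smul ℂ _)
    · exact isEmptyElim (show Fin b₀.cols from c)
  · rintro (i | j | l) c
    · refine Eq.trans ?_ (hsum i _).symm
      obtain ⟨c, rfl⟩ := (g i).eC.symm.surjective c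
      rcases c with c | m
      · rw [hV1, hDb']
        simp [bl', (g i).hY]
      · rw [hV2, e3]
        simp [bl', (g i).hY, Matrix.one_apply]
    · rw [hV3 j c, e4]
      refine Eq.trans ?_ (Fintype.sum_unique (ι := Fin b₁.rows) _).symm
      exact ((congrArg₂ (· • ·) (hY₁ default c) (hW3 j default)).trans (one_smul ℂ _)).symm
    · exact isEmptyElim (show Fin b₀.cols from c)

/-! ### Growth of the canonical blocks -/

lemma Jmat_grow (k : ℕ) (r c : Fin (k + 1) ⊕ Fin 1) :
    Jmat (k + 1 + 1) 0 (finSumFinEquiv r) (finSumFinEquiv c) =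
      fromBlocks (Jmat (k + 1) 0) (of fun r _ => if r = Fin.last k then 1 else 0) 0 0 r c := by
  rcases r with r | r <;> rcases c with c | c <;>
    simp [Jmat, Fin.ext_iff] <;> grind

lemma Gmat_transpose_grow (k : ℕ) (r : Fin (k + 1) ⊕ Fin 1) (c : Fin k ⊕ Fin 1) :
    (Gmat (k + 1))ᵀ (finSumFinEquiv r) (finSumFinEquiv c) =
      fromBlocks (Gmat k)ᵀ (of fun r _ => if r = Fin.last k then 1 else 0) 0 0 r c := by
  rcases r with r | r <;> rcases c with c | c <;>
    simp [Gmat, Fin.ext_iff] <;> grind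

lemma Fmat_transpose_grow (k : ℕ) (r : Fin (k + 1) ⊕ Fin 1) (c : Fin k ⊕ Fin 1) :
    (Fmat (k + 1))ᵀ (finSumFinEquiv r) (finSumFinEquiv c) =
      fromBlocks (Fmat k)ᵀ 0 0 1 r c := by
  rcases r with r | r <;> rcases c with c | c <;>
    simp [Fmat, Matrix.one_apply, Fin.ext_iff] <;> grind

lemma one_grow (k l : ℕ) (r c : Fin k ⊕ Fin l) :
    (1 : Matrix (Fin (k + l)) (Fin (k + l)) ℂ) (finSumFinEquiv r) (finSumFinEquiv c) =
      fromBlocks 1 0 0 1 r c := by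
  rw [fromBlocks_one]
  simp [Matrix.one_apply]

lemma Jmat_surj_of_ne_last (k : ℕ) (r : Fin (k + 1)) (hr : r ≠ Fin.last k) :
    ∃ x, Jmat (k + 1) 0 *ᵥ x = Pi.single r 1 := by
  have hr' : (r : ℕ) < k := by
    have := Fin.val_ne_of_ne hr
    simp at this; omega
  refine ⟨Pi.single ⟨r + 1, by omega⟩ 1, ?_⟩
  funext i
  simp [Jmat, Pi.single_apply, Fin.ext_iff]
  grind

lemma Gmat_transpose_surj_of_ne_last (k : ℕ) (r : Fin (k + 1)) (hr : r ≠ Fin.last k) :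
    ∃ x, (Gmat k)ᵀ *ᵥ x = Pi.single r 1 := by
  have hr' : (r : ℕ) < k := by
    have := Fin.val_ne_of_ne hr
    simp at this; omega
  refine ⟨Pi.single ⟨r, hr'⟩ 1, ?_⟩
  funext i
  simp [Gmat, Pi.single_apply, Fin.ext_iff]

lemma Gmat_surj (k : ℕ) (r : Fin k) : ∃ x, Gmat k *ᵥ x = Pi.single r 1 := by
  refine ⟨Pi.single r.castSucc 1, ?_⟩
  funext i
  simp [Gmat, Pi.single_apply, Fin.ext_iff, eq_comm]

lemma Jmat_surj (k : ℕ) (μ : ℂ) (hμ : μ ≠ 0) (r : Fin k) :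
    ∃ x, Jmat k μ *ᵥ x = Pi.single r 1 := by
  have hdet : IsUnit (Jmat k μ).det := by
    rw [Matrix.det_of_isUpperTriangular]
    · simp [Jmat, hμ]
    · intro i j hij
      have : (j : ℕ) < i := hij
      simp [Jmat]; grind
  exact ⟨(Jmat k μ)⁻¹ *ᵥ Pi.single r 1, by
    rw [mulVec_mulVec, mul_nonsing_inv _ hdet, one_mulVec]⟩

/-- A block on which `X b` is surjective does not grow. -/
def Growth.trivial {X Y : ∀ b : CanBlockData, Matrix (Fin b.rows) (Fin b.cols) ℂ}
    (b : CanBlockData) (h : ∀ r, ∃ x, X b *ᵥ x = Pi.single r 1) : Growth X Y b where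
  grown := b
  size := 0
  f := Fin.elim0
  f_inj := fun a => a.elim0
  eR := (Equiv.sumEmpty _ _).symm
  eC := (Equiv.sumEmpty _ _).symm
  hX := by rintro (r | r) (c | c) <;> first | exact r.elim0 | exact c.elim0 | rfl
  hY := by rintro (r | r) (c | c) <;> first | exact r.elim0 | exact c.elim0 | rfl
  surj := fun r _ => h r
  zero := fun m => m.elim0

/-- With `C = A`, `D = B`, the block `E_{k+1}(0)` grows to `E_{k+2}(0)`. -/
def Growth.jordanZero (k : ℕ) :
    Growth CanBlockData.Amat CanBlockData.Bmat (.jordan (k + 1) (some 0)) where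
  grown := .jordan (k + 1 + 1) (some 0)
  size := 1
  f := fun _ => Fin.last k
  f_inj := fun _ _ _ => Subsingleton.elim _ _
  eR := (finSumFinEquiv (m := k + 1) (n := 1)).symm
  eC := (finSumFinEquiv (m := k + 1) (n := 1)).symm
  hX := Jmat_grow k
  hY := one_grow (k + 1) 1
  surj := fun r hr => Jmat_surj_of_ne_last k r fun h => hr ⟨0, h.symm⟩
  zero := fun m (j : Fin (k + 1)) => by
    change Jmat (k + 1) 0 (Fin.last k) j = 0
    simp [Jmat]; omega

/-- With `C = B`, `D = A`, the block `E_{k+1}(∞)` grows to `E_{k+2}(∞)`. -/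
def Growth.jordanInfty (k : ℕ) :
    Growth CanBlockData.Bmat CanBlockData.Amat (.jordan (k + 1) none) where
  grown := .jordan (k + 1 + 1) none
  size := 1
  f := fun _ => Fin.last k
  f_inj := fun _ _ _ => Subsingleton.elim _ _
  eR := (finSumFinEquiv (m := k + 1) (n := 1)).symm
  eC := (finSumFinEquiv (m := k + 1) (n := 1)).symm
  hX := Jmat_grow k
  hY := one_grow (k + 1) 1
  surj := fun r hr => Jmat_surj_of_ne_last k r fun h => hr ⟨0, h.symm⟩
  zero := fun m (j : Fin (k + 1)) => by
    change Jmat (k + 1) 0 (Fin.last k) j = 0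
    simp [Jmat]; omega

/-- With `C = B`, `D = A`, the block `L_wᵀ` grows to `L_{w+1}ᵀ`. -/
def Growth.vert (w : ℕ) : Growth CanBlockData.Bmat CanBlockData.Amat (.vert w) where
  grown := .vert (w + 1)
  size := 1
  f := fun _ => Fin.last w
  f_inj := fun _ _ _ => Subsingleton.elim _ _
  eR := (finSumFinEquiv (m := w + 1) (n := 1)).symm
  eC := (finSumFinEquiv (m := w) (n := 1)).symm
  hX := Gmat_transpose_grow w
  hY := Fmat_transpose_grow w
  surj := fun r hr => Gmat_transpose_surj_of_ne_last w r fun h => hr ⟨0, h.symm⟩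
  zero := fun m (j : Fin w) => by
    change (Gmat w)ᵀ (Fin.last w) j = 0
    simp [Gmat]; omega

lemma exists_growth (b : CanBlockData) (hb : b.ok) :
    ∃ g : Growth CanBlockData.Bmat CanBlockData.Amat b, g.grown.ok := by
  rcases b with ⟨c, _ | μ⟩ | h | w
  · obtain ⟨k, rfl⟩ : ∃ k, c = k + 1 := ⟨c - 1, (Nat.sub_add_cancel hb).symm⟩
    exact ⟨.jordanInfty k, Nat.le_add_left 1 (k + 1)⟩
  · exact ⟨.trivial _ fun r => ⟨Pi.single r 1, one_mulVec _⟩, hb⟩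
  · exact ⟨.trivial _ (Gmat_surj h), trivial⟩
  · exact ⟨.vert w, trivial⟩

/-- Jordan blocks `E_c(μ)` with `c ≥ 1` and finite eigenvalue `μ ∈ ℂ`. -/
def CanBlockData.IsFiniteJordan (b : CanBlockData) : Prop :=
  ∃ c μ, 1 ≤ c ∧ b = .jordan c (some μ)

lemma exists_growth_of_isFiniteJordan (b : CanBlockData) (hb : b.IsFiniteJordan) :
    ∃ g : Growth CanBlockData.Amat CanBlockData.Bmat b, g.grown.IsFiniteJordan := by
  obtain ⟨c, μ, hc, rfl⟩ := hb
  by_cases hμ : μ = 0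
  · subst hμ
    obtain ⟨k, rfl⟩ : ∃ k, c = k + 1 := ⟨c - 1, (Nat.sub_add_cancel hc).symm⟩
    exact ⟨.jordanZero k, k + 1 + 1, 0, Nat.le_add_left 1 (k + 1), rfl⟩
  · exact ⟨.trivial _ (Jmat_surj c μ hμ), c, μ, hc, rfl⟩

instance (μ : Option ℂ) : Unique (Fin (CanBlockData.jordan 1 μ).rows) :=
  inferInstanceAs (Unique (Fin 1))
instance (μ : Option ℂ) : Unique (Fin (CanBlockData.jordan 1 μ).cols) :=
  inferInstanceAs (Unique (Fin 1))
instance : Unique (Fin (CanBlockData.vert 0).rows) := inferInstanceAs (Unique (Fin 1))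
instance : IsEmpty (Fin (CanBlockData.vert 0).cols) := inferInstanceAs (IsEmpty (Fin 0))

lemma Jmat_one_zero : Jmat 1 0 = 0 := by ext i j; simp [Jmat]

lemma one_fin_one_apply (r c : Fin 1) : (1 : Matrix (Fin 1) (Fin 1) ℂ) r c = 1 := by
  rw [Subsingleton.elim r c, one_apply_eq]

/-! ### Jordan normal form -/

lemma Jmat_add_smul_one (k : ℕ) (ν μ : ℂ) (r c : Fin k) :
    Jmat k ν r c + μ * (1 : Matrix (Fin k) (Fin k) ℂ) r c = Jmat k (ν + μ) r c := by
  simp only [Jmat, Matrix.one_apply, of_apply, Fin.ext_iff]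
  grind

/-- Replacing `A` by `A - μ B` shifts the eigenvalues of all finite Jordan blocks by `-μ`. -/
lemma HasBlocks.of_isFiniteJordan_shift {V W : Type} [AddCommGroup V] [Module ℂ V]
    [AddCommGroup W] [Module ℂ W] (A B : V →ₗ[ℂ] W) (μ : ℂ)
    (h : HasBlocks CanBlockData.IsFiniteJordan CanBlockData.Amat CanBlockData.Bmat
      (A - μ • B) B) :
    HasBlocks CanBlockData.IsFiniteJordan CanBlockData.Amat CanBlockData.Bmat A B := by
  obtain ⟨ι, hι, bl, hok, bV, bW, hA, hB⟩ := h
  choose c ν hc hbl using hok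
  obtain rfl : bl = fun i => .jordan (c i) (some (ν i)) := funext hbl
  refine ⟨ι, hι, fun i => .jordan (c i) (some (ν i + μ)), fun i => ⟨_, _, hc i, rfl⟩,
    bV, bW, fun i j => ?_, hB⟩
  have h1 : ∀ v, A v = (A - μ • B) v + μ • B v := fun v => by simp
  refine (h1 _).trans ((congrArg₂ (fun x y => x + μ • y) (hA i j) (hB i j)).trans ?_)
  rw [Finset.smul_sum, ← Finset.sum_add_distrib]
  refine Finset.sum_congr rfl fun k _ => ?_
  rw [smul_smul, ← add_smul]
  congr 1
  exact Jmat_add_smul_one (c i) (ν i) μ k j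

/-- Jordan normal form, for pencils with bijective `B`. If `μ` is an eigenvalue of `B⁻¹ A`, then `C
= A - μ B` is not surjective, so that `range C` is smaller than `W`; on `B⁻¹(range C) → range C` the
map `B` is still bijective. -/
theorem hasBlocks_of_bijective (n : ℕ) : ∀ {V W : Type} [AddCommGroup V] [Module ℂ V]
    [FiniteDimensional ℂ V] [AddCommGroup W] [Module ℂ W] [FiniteDimensional ℂ W]
    (A B : V →ₗ[ℂ] W), finrank ℂ W = n → Function.Bijective B →
    HasBlocks CanBlockData.IsFiniteJordan CanBlockData.Amat CanBlockData.Bmat A B := by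
  induction n using Nat.strong_induction_on with
  | _ n ih =>
  intro V W _ _ _ _ _ _ A B hn hB
  let e := LinearEquiv.ofBijective B hB
  rcases subsingleton_or_nontrivial V with hV | hV
  · have hW : Subsingleton W := e.symm.toEquiv.subsingleton
    have : IsEmpty (Σ i : Empty, Fin (Empty.elim i : CanBlockData).cols) := ⟨fun p => p.1.elim⟩
    have : IsEmpty (Σ i : Empty, Fin (Empty.elim i : CanBlockData).rows) := ⟨fun p => p.1.elim⟩
    exact ⟨Empty, inferInstance, fun i => i.elim, fun i => i.elim, Basis.empty V, Basis.empty W,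
      fun i => i.elim, fun i => i.elim⟩
  obtain ⟨μ, hμ⟩ := Module.End.exists_eigenvalue (e.symm.toLinearMap ∘ₗ A)
  obtain ⟨v, hv, hv0⟩ := hμ.exists_hasEigenvector
  rw [Module.End.mem_eigenspace_iff] at hv
  have hv' : (A - μ • B) v = 0 := by
    have : A v = e (μ • v) := by rw [← hv]; simp
    simp [this, e]
  apply HasBlocks.of_isFiniteJordan_shift A B μ
  set C := A - μ • B
  have hC : ¬ Function.Surjective C := fun hs => hv0 <|
    (LinearMap.injective_iff_surjective_of_finrank_eq_finrank e.finrank_eq).2 hs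
      (hv'.trans (map_zero C).symm)
  refine HasBlocks.extend exists_growth_of_isFiniteJordan (.jordan 1 (some 0)) (.vert 0)
    ⟨1, 0, le_rfl, rfl⟩ Jmat_one_zero one_fin_one_apply C B
    ((LinearMap.range C).comap B) (LinearMap.range C) rfl rfl (.inl hB.2)
    (fun v _ => ⟨v, rfl⟩) (fun v hv => hv) ?_
  refine ih _ ?_ _ _ rfl ⟨?_, ?_⟩
  · rw [← hn]
    exact Submodule.finrank_lt (fun h => hC (LinearMap.range_eq_top.1 h))
  · intro a b hab
    exact Subtype.ext (hB.1 (congrArg Subtype.val hab))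
  · rintro ⟨w, hw⟩
    obtain ⟨v, rfl⟩ := hB.2 w
    exact ⟨⟨v, hw⟩, rfl⟩

/-! ### Duality -/

/-- In finite dimension every basis of the dual space is the dual basis of a basis. -/
lemma exists_predual {V I : Type} [AddCommGroup V] [Module ℂ V] [FiniteDimensional ℂ V]
    [Finite I] [DecidableEq I] (b : Basis I ℂ (Dual ℂ V)) :
    ∃ c : Basis I ℂ V, ∀ p q, b p (c q) = if p = q then 1 else 0 := by
  refine ⟨b.dualBasis.map (evalEquiv ℂ V).symm, fun p q => ?_⟩
  rw [Basis.map_apply, Module.apply_evalEquiv_symm_apply, Basis.coe_dualBasis, Basis.coord_apply,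
    Basis.repr_self, Finsupp.single_apply]

/-- If the dual of `A` is block diagonal in the bases `f, g`, with blocks `X i`, then `A` is block
diagonal in the predual bases, with blocks `(X i)ᵀ`. -/
lemma apply_predual {ι V W : Type} [Finite ι] [DecidableEq ι] {R C : ι → Type}
    [∀ i, Fintype (R i)] [∀ i, Fintype (C i)] [∀ i, DecidableEq (R i)] [∀ i, DecidableEq (C i)]
    [AddCommGroup V] [Module ℂ V] [AddCommGroup W] [Module ℂ W]
    (X : ∀ i, Matrix (R i) (C i) ℂ) (A : V →ₗ[ℂ] W)
    (f : Basis (Σ i, C i) ℂ (Dual ℂ W)) (g : Basis (Σ i, R i) ℂ (Dual ℂ V))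
    (f' : Basis (Σ i, C i) ℂ W) (g' : Basis (Σ i, R i) ℂ V)
    (hf : ∀ p q, f p (f' q) = if p = q then 1 else 0)
    (hg : ∀ p q, g p (g' q) = if p = q then 1 else 0)
    (h : ∀ i j, A.dualMap (f ⟨i, j⟩) = ∑ k, X i k j • g ⟨i, k⟩) (i : ι) (k : R i) :
    A (g' ⟨i, k⟩) = ∑ j, X i k j • f' ⟨i, j⟩ := by
  have : FiniteDimensional ℂ W := .of_basis f'
  rw [← sub_eq_zero, ← Module.forall_dual_apply_eq_zero_iff ℂ]
  suffices H : ∀ p, f p (A (g' ⟨i, k⟩) - ∑ j, X i k j • f' ⟨i, j⟩) = 0 by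
    intro φ
    have : (Dual.eval ℂ W (A (g' ⟨i, k⟩) - ∑ j, X i k j • f' ⟨i, j⟩)) = 0 := f.ext H
    exact LinearMap.congr_fun this φ
  rintro ⟨i', j'⟩
  rw [map_sub, sub_eq_zero, ← LinearMap.dualMap_apply, h]
  simp only [LinearMap.sum_apply, LinearMap.smul_apply, hg, map_sum, map_smul, hf]
  by_cases hi : i' = i
  · subst hi
    simp
  · simp [hi]

/-- The canonical block equivalent to the transpose of a given one. The transpose of a Jordan block
is the same Jordan block with the orders of rows and columns reversed. -/
def CanBlockData.tr : CanBlockData → CanBlockData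
  | .jordan c μ => .jordan c μ
  | .horiz h => .vert h
  | .vert w => .horiz w

/-- Rows of `b.tr` as columns of `b`. -/
def CanBlockData.trR : (b : CanBlockData) → Fin b.tr.rows ≃ Fin b.cols
  | .jordan c _ => (Fin.revPerm : Equiv.Perm (Fin c))
  | .horiz h => Equiv.refl (Fin (h + 1))
  | .vert w => Equiv.refl (Fin w)

/-- Columns of `b.tr` as rows of `b`. -/
def CanBlockData.trC : (b : CanBlockData) → Fin b.tr.cols ≃ Fin b.rows
  | .jordan c _ => (Fin.revPerm : Equiv.Perm (Fin c))
  | .horiz h => Equiv.refl (Fin h)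
  | .vert w => Equiv.refl (Fin (w + 1))

lemma CanBlockData.ok_tr {b : CanBlockData} (hb : b.ok) : b.tr.ok := by
  rcases b with ⟨c, μ⟩ | h | w
  exacts [hb, trivial, trivial]

lemma Jmat_rev (k : ℕ) (μ : ℂ) (r c : Fin k) : Jmat k μ c.rev r.rev = Jmat k μ r c := by
  simp only [Jmat, of_apply, Fin.val_rev]
  grind

lemma one_rev (k : ℕ) (r c : Fin k) :
    (1 : Matrix (Fin k) (Fin k) ℂ) c.rev r.rev = (1 : Matrix (Fin k) (Fin k) ℂ) r c := by
  simp only [Matrix.one_apply, Fin.rev_inj, eq_comm]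

lemma CanBlockData.Amat_tr (b : CanBlockData) (r : Fin b.tr.rows) (c : Fin b.tr.cols) :
    b.Amat (b.trC c) (b.trR r) = b.tr.Amat r c := by
  rcases b with ⟨k, _ | μ⟩ | h | w
  exacts [one_rev k r c, Jmat_rev k μ r c, rfl, rfl]

lemma CanBlockData.Bmat_tr (b : CanBlockData) (r : Fin b.tr.rows) (c : Fin b.tr.cols) :
    b.Bmat (b.trC c) (b.trR r) = b.tr.Bmat r c := by
  rcases b with ⟨k, _ | μ⟩ | h | w
  exacts [Jmat_rev k 0 r c, one_rev k r c, rfl, rfl]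

lemma HasBlocks.of_dualMap {V W : Type} [AddCommGroup V] [Module ℂ V] [FiniteDimensional ℂ V]
    [AddCommGroup W] [Module ℂ W] [FiniteDimensional ℂ W] (A B : V →ₗ[ℂ] W)
    (h : HasBlocks CanBlockData.ok CanBlockData.Amat CanBlockData.Bmat A.dualMap B.dualMap) :
    HasBlocks CanBlockData.ok CanBlockData.Amat CanBlockData.Bmat A B := by
  classical
  obtain ⟨ι, hι, bl, hok, f, g, hA, hB⟩ := h
  obtain ⟨f', hf⟩ := exists_predual f
  obtain ⟨g', hg⟩ := exists_predual g
  have hA' := apply_predual (fun i => (bl i).Amat) A f g f' g' hf hg hA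
  have hB' := apply_predual (fun i => (bl i).Bmat) B f g f' g' hf hg hB
  let eC : (Σ i, Fin (bl i).tr.cols) ≃ Σ i, Fin (bl i).rows :=
    Equiv.sigmaCongrRight fun i => (bl i).trC
  let eR : (Σ i, Fin (bl i).tr.rows) ≃ Σ i, Fin (bl i).cols :=
    Equiv.sigmaCongrRight fun i => (bl i).trR
  have hC : ∀ i j, g'.reindex eC.symm ⟨i, j⟩ = g' ⟨i, (bl i).trC j⟩ := fun i j => by
    rw [Basis.reindex_apply]; rfl
  have hR : ∀ i j, f'.reindex eR.symm ⟨i, j⟩ = f' ⟨i, (bl i).trR j⟩ := fun i j => by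
    rw [Basis.reindex_apply]; rfl
  refine ⟨ι, hι, fun i => (bl i).tr, fun i => CanBlockData.ok_tr (hok i), g'.reindex eC.symm,
    f'.reindex eR.symm, fun i j => ?_, fun i j => ?_⟩
  · rw [hC, hA', ← (bl i).trR.sum_comp]
    simp only [hR, CanBlockData.Amat_tr]
  · rw [hC, hB', ← (bl i).trR.sum_comp]
    simp only [hR, CanBlockData.Bmat_tr]

/-! ### The canonical form -/

lemma HasBlocks.swap {ok : CanBlockData → Prop}
    {X Y : ∀ b : CanBlockData, Matrix (Fin b.rows) (Fin b.cols) ℂ}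
    {V W : Type} [AddCommGroup V] [Module ℂ V] [AddCommGroup W] [Module ℂ W]
    {C D : V →ₗ[ℂ] W} (h : HasBlocks ok X Y C D) : HasBlocks ok Y X D C := by
  obtain ⟨ι, hι, bl, hok, f, g, hC, hD⟩ := h
  exact ⟨ι, hι, bl, hok, f, g, hD, hC⟩

lemma HasBlocks.mono {ok ok' : CanBlockData → Prop} (hle : ∀ b, ok b → ok' b)
    {X Y : ∀ b : CanBlockData, Matrix (Fin b.rows) (Fin b.cols) ℂ}
    {V W : Type} [AddCommGroup V] [Module ℂ V] [AddCommGroup W] [Module ℂ W]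
    {C D : V →ₗ[ℂ] W} (h : HasBlocks ok X Y C D) : HasBlocks ok' X Y C D := by
  obtain ⟨ι, hι, bl, hok, h⟩ := h
  exact ⟨ι, hι, bl, fun i => hle _ (hok i), h⟩

/-- The canonical form for pairs of linear maps, by induction on `dim V + dim W`. The inner `step`
applies the reduction with `C = B`, `D = A` to a non-surjective `B`. -/
theorem hasBlocks (n : ℕ) : ∀ {V W : Type} [AddCommGroup V] [Module ℂ V]
    [FiniteDimensional ℂ V] [AddCommGroup W] [Module ℂ W] [FiniteDimensional ℂ W]
    (A B : V →ₗ[ℂ] W), finrank ℂ V + finrank ℂ W = n →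
    HasBlocks CanBlockData.ok CanBlockData.Amat CanBlockData.Bmat A B := by
  induction n using Nat.strong_induction_on with
  | _ n ih =>
  have step : ∀ {V W : Type} [AddCommGroup V] [Module ℂ V]
      [FiniteDimensional ℂ V] [AddCommGroup W] [Module ℂ W] [FiniteDimensional ℂ W]
      (A B : V →ₗ[ℂ] W), finrank ℂ V + finrank ℂ W = n → ¬ Function.Surjective B →
      HasBlocks CanBlockData.ok CanBlockData.Amat CanBlockData.Bmat A B := by
    intro V W _ _ _ _ _ _ A B hn hB
    refine HasBlocks.swap <| HasBlocks.extend exists_growth (.jordan 1 none) (.vert 0)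
      (le_refl 1) Jmat_one_zero one_fin_one_apply B A
      ((LinearMap.range B).comap A) (LinearMap.range B) rfl rfl (.inr trivial)
      (fun v _ => ⟨v, rfl⟩) (fun v hv => hv) ?_
    refine (ih _ ?_ _ _ rfl).swap
    rw [← hn]
    exact add_lt_add_of_le_of_lt (Submodule.finrank_le _)
      (Submodule.finrank_lt fun h => hB (LinearMap.range_eq_top.1 h))
  intro V W _ _ _ _ _ _ A B hn
  by_cases hs : Function.Surjective B
  · by_cases hi : Function.Injective B
    · refine (hasBlocks_of_bijective _ A B rfl ⟨hi, hs⟩).mono ?_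
      rintro _ ⟨c, μ, hc, rfl⟩
      exact hc
    · refine HasBlocks.of_dualMap A B (step A.dualMap B.dualMap ?_ ?_)
      · rw [Subspace.dual_finrank_eq, Subspace.dual_finrank_eq, add_comm, hn]
      · rwa [LinearMap.dualMap_surjective_iff]
  · exact step A B hn hs

end Helpers

/-- Kronecker Canonical Form, existence: every pencil of `m × n` complex
matrices is strictly equivalent to a block-diagonal pencil of canonical blocks
(Jordan blocks `E_c(μ)`, `μ ∈ ℂ ∪ {∞}`, `c ≥ 1`; horizontal Kronecker blocks
`L_h`, `h ≥ 0`; vertical Kronecker blocks `L_wᵀ`, `w ≥ 0`). -/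
theorem kronecker_canonical_form_existence
    (m n : ℕ) (A B : Matrix (Fin m) (Fin n) ℂ) :
    ∃ (N : ℕ) (bl : Fin N → CanBlockData), (∀ i, (bl i).ok) ∧
      ∃ (er : (Σ i, Fin ((bl i).rows)) ≃ Fin m)
        (ec : (Σ i, Fin ((bl i).cols)) ≃ Fin n)
        (P : Matrix (Fin m) (Fin m) ℂ) (Q : Matrix (Fin n) (Fin n) ℂ),
        IsUnit P.det ∧ IsUnit Q.det ∧
        P * A * Q = Matrix.reindex er ec (Matrix.blockDiagonal' fun i => (bl i).Amat) ∧
        P * B * Q = Matrix.reindex er ec (Matrix.blockDiagonal' fun i => (bl i).Bmat) := by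
  obtain ⟨ι, _, bl, hok, bV, bW, hA, hB⟩ := hasBlocks _ (toLin' A) (toLin' B) rfl
  let e : Fin (Nat.card ι) ≃ ι := (Finite.equivFin ι).symm
  let sR : (Σ i, Fin (bl (e i)).rows) ≃ Σ i, Fin (bl i).rows :=
    Equiv.sigmaCongrLeft (β := fun i => Fin (bl i).rows) e
  let sC : (Σ i, Fin (bl (e i)).cols) ≃ Σ i, Fin (bl i).cols :=
    Equiv.sigmaCongrLeft (β := fun i => Fin (bl i).cols) e
  let stdR := Pi.basisFun ℂ (Fin m)
  let stdC := Pi.basisFun ℂ (Fin n)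
  let er := sR.trans (bW.indexEquiv stdR)
  let ec := sC.trans (bV.indexEquiv stdC)
  let f := bV.reindex (bV.indexEquiv stdC)
  let g := bW.reindex (bW.indexEquiv stdR)
  have hf : ∀ p, f (ec p) = bV (sC p) := fun p => by simp [f, ec]
  have hg : ∀ p, g (er p) = bW (sR p) := fun p => by simp [g, er]
  -- `P` and `Q` are the base changes from the standard bases to `g` and `f`
  have key : ∀ (M : Matrix (Fin m) (Fin n) ℂ)
      (X : ∀ b : CanBlockData, Matrix (Fin b.rows) (Fin b.cols) ℂ),
      (∀ i j, toLin' M (bV ⟨i, j⟩) = ∑ k, X (bl i) k j • bW ⟨i, k⟩) →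
      g.toMatrix stdR * M * stdC.toMatrix f =
        Matrix.reindex er ec (Matrix.blockDiagonal' fun i => X (bl (e i))) := by
    intro M X hM
    have h1 : M = LinearMap.toMatrix stdC stdR (toLin' M) := (LinearMap.toMatrix'_toLin' M).symm
    conv_lhs => rw [h1]
    rw [basis_toMatrix_mul_linearMap_toMatrix_mul_basis_toMatrix]
    ext r c
    obtain ⟨⟨i, k⟩, rfl⟩ := er.surjective r
    obtain ⟨⟨i', j⟩, rfl⟩ := ec.surjective c
    have h2 : toLin' M (f (ec ⟨i', j⟩)) = ∑ k, X (bl (e i')) k j • g (er ⟨i', k⟩) := by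
      simp only [hf, hg]
      exact hM (e i') j
    rw [LinearMap.toMatrix_apply, h2, reindex_apply, submatrix_apply, Equiv.symm_apply_apply,
      Equiv.symm_apply_apply, blockDiagonal'_apply]
    simp only [map_sum, map_smul, Module.Basis.repr_self, Finsupp.coe_finsetSum, Finset.sum_apply,
      Finsupp.smul_apply, Finsupp.single_apply, EmbeddingLike.apply_eq_iff_eq]
    split_ifs with h
    · subst h
      simp
    · refine Finset.sum_eq_zero fun k' _ => ?_
      rw [if_neg fun h' => h (congrArg Sigma.fst h').symm, smul_zero]
  exact ⟨Nat.card ι, fun i => bl (e i), fun i => hok _, er, ec, g.toMatrix stdR, stdC.toMatrix f,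
    (isUnit_iff_isUnit_det _).1 (IsUnit.of_mul_eq_one _ (g.toMatrix_mul_toMatrix_flip stdR)),
    (isUnit_iff_isUnit_det _).1 (IsUnit.of_mul_eq_one _ (stdC.toMatrix_mul_toMatrix_flip f)),
    key A _ hA, key B _ hB⟩


end
end

section
/- (Kronecker Canonical Form, uniqueness.) Suppose two block-diagonal pencils of complex matrices, each formed from canonical blocks — Jordan blocks E_c(μ) with μ ∈ ℂ ∪ {∞} and c ≥ 1, horizontal Kronecker blocks L_h with h ≥ 0, and vertical Kronecker blocks L_wᵀ with w ≥ 0 — are strictly equivalent. Then their block data coincide up to permutation: the multiset of pairs (μ, c) of their Jordan blocks, the multiset of widths of their horizontal Kronecker blocks, and the multiset of heights of their vertical Kronecker blocks are respectively equal. -/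
/-!
Multiplicities of canonical blocks are recovered from dimensions of spaces of chains
`M x₀ = 0`, `M x_{i+1} = N x_i`. Such dimensions are unchanged by strict equivalence
(`finrank_chain_strictEquiv`) and additive over direct sums (`finrank_chain_blockDiagonal'`), so it
suffices to compute them on each canonical block.

* For `p ∈ ℂ ∪ {∞}` let `nu p k` be the dimension of the open chains of length `k` with
  `(M, N) = (A - pB, B)`, or `(B, A)` if `p = ∞`. It equals `min k c` on `E_c(p)`, vanishes on
  `E_c(q)` for `q ≠ p` and on `L_wᵀ` because `M` is injective there, and equals `k` on `L_h` because
  `M` is surjective there. The second difference in `k` kills the linear contribution of the `L_h`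
  and leaves the number of blocks `E_k(p)` (`ite_jordan`).
* Let `kap k` be the dimension of the chains of `(A, B)` that are closed by `B x_{k-1} = 0`. It
  equals `max (k - h) 0` on `L_h` and vanishes on all other blocks, where `A` or `B` is injective.
  Its second difference counts the blocks `L_h` (`ite_horiz`); applied to the transposed pencil it
  counts the blocks `L_wᵀ` (`ite_vert`).

Equal multiplicities for every block give the bijection fibre by fibre.
-/

open Matrix

noncomputable section

/-! ### Chains of a pair of linear maps -/

section Chains

variable {V W V' W' : Type*} [AddCommGroup V] [Module ℂ V] [AddCommGroup W] [Module ℂ W]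
  [AddCommGroup V'] [Module ℂ V'] [AddCommGroup W'] [Module ℂ W']

/-- Chains of length `k` for a pair of linear maps `M, N : V → W`: tuples `x₀, …, x_{k-1}` with
`M x₀ = 0` and `M x_{i+1} = N x_i`; if `cl` holds they must moreover be closed, `N x_{k-1} = 0`.
Open chains of `(A - μB, B)` are the pencil morphisms from the Jordan block `E_k(μ)`; closed chains
of `(A, B)` are, up to signs, the polynomial solutions of `(A + λB) x(λ) = 0` of degree `< k`. -/
def chain (cl : Prop) (M N : V →ₗ[ℂ] W) (k : ℕ) : Submodule ℂ (Fin k → V) where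
  carrier := {x | (∀ i : Fin k, (i : ℕ) = 0 → M (x i) = 0) ∧
    (∀ i j : Fin k, (j : ℕ) = i + 1 → M (x j) = N (x i)) ∧
    (cl → ∀ i : Fin k, (i : ℕ) + 1 = k → N (x i) = 0)}
  add_mem' := by
    rintro x y ⟨hx1, hx2, hx3⟩ ⟨hy1, hy2, hy3⟩
    refine ⟨fun i hi => ?_, fun i j hij => ?_, fun hc i hi => ?_⟩
    · simp [hx1 i hi, hy1 i hi]
    · simp [hx2 i j hij, hy2 i j hij]
    · simp [hx3 hc i hi, hy3 hc i hi]
  zero_mem' := by simp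
  smul_mem' := by
    rintro c x ⟨hx1, hx2, hx3⟩
    refine ⟨fun i hi => ?_, fun i j hij => ?_, fun hc i hi => ?_⟩
    · simp [hx1 i hi]
    · simp [hx2 i j hij]
    · simp [hx3 hc i hi]

lemma mem_chain {cl : Prop} {M N : V →ₗ[ℂ] W} {k : ℕ} {x : Fin k → V} :
    x ∈ chain cl M N k ↔ (∀ i : Fin k, (i : ℕ) = 0 → M (x i) = 0) ∧
    (∀ i j : Fin k, (j : ℕ) = i + 1 → M (x j) = N (x i)) ∧
    (cl → ∀ i : Fin k, (i : ℕ) + 1 = k → N (x i) = 0) := Iff.rfl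

lemma finrank_chain_equiv (cl : Prop) {M N : V →ₗ[ℂ] W} {M' N' : V' →ₗ[ℂ] W'} (k : ℕ)
    (e : V ≃ₗ[ℂ] V') (f : W ≃ₗ[ℂ] W') (hM : ∀ x, M' (e x) = f (M x))
    (hN : ∀ x, N' (e x) = f (N x)) :
    Module.finrank ℂ (chain cl M N k) = Module.finrank ℂ (chain cl M' N' k) := by
  have h : chain cl M N k =
      (chain cl M' N' k).comap (LinearEquiv.piCongrRight fun _ : Fin k => e).toLinearMap := by
    ext x
    simp [mem_chain, hM, hN]
  rw [h]
  exact (LinearEquiv.ofSubmodule' (LinearEquiv.piCongrRight fun _ : Fin k => e)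
    (chain cl M' N' k)).finrank_eq

/-- Chains of a direct sum are families of chains of the summands. -/
lemma finrank_chain_pi {ι : Type*} [Fintype ι] {V W : ι → Type*}
    [∀ i, AddCommGroup (V i)] [∀ i, Module ℂ (V i)] [∀ i, Module.Finite ℂ (V i)]
    [∀ i, AddCommGroup (W i)] [∀ i, Module ℂ (W i)]
    (cl : Prop) (M N : ∀ i, V i →ₗ[ℂ] W i) (k : ℕ) :
    Module.finrank ℂ (chain cl (LinearMap.piMap M) (LinearMap.piMap N) k) =
      ∑ i, Module.finrank ℂ (chain cl (M i) (N i) k) := by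
  rw [← Module.finrank_pi_fintype]
  refine LinearEquiv.finrank_eq
    { toFun := fun x i => ⟨fun t => x.1 t i, ?_⟩
      invFun := fun y => ⟨fun t i => (y i).1 t, ?_⟩
      map_add' := fun _ _ => rfl
      map_smul' := fun _ _ => rfl
      left_inv := fun _ => rfl
      right_inv := fun _ => rfl }
  · obtain ⟨h1, h2, h3⟩ := x.2
    exact ⟨fun t ht => congrFun (h1 t ht) i, fun s t hst => congrFun (h2 s t hst) i,
      fun hc t ht => congrFun (h3 hc t ht) i⟩
  · exact ⟨fun t ht => funext fun i => (y i).2.1 t ht,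
      fun s t hst => funext fun i => (y i).2.2.1 s t hst,
      fun hc t ht => funext fun i => (y i).2.2.2 hc t ht⟩

lemma finrank_chain_of_injective (cl : Prop) {M : V →ₗ[ℂ] W} (N : V →ₗ[ℂ] W) (k : ℕ)
    (hM : Function.Injective M) : Module.finrank ℂ (chain cl M N k) = 0 := by
  have : chain cl M N k = ⊥ := by
    rw [eq_bot_iff]
    rintro x ⟨h1, h2, -⟩
    have key : ∀ (i : ℕ) (hi : i < k), x ⟨i, hi⟩ = 0 := by
      intro i
      induction i with
      | zero => exact fun hi => hM (by rw [h1 _ rfl, map_zero])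
      | succ i ih =>
        intro hi
        refine hM ?_
        rw [h2 ⟨i, by omega⟩ ⟨i + 1, hi⟩ rfl, ih, map_zero, map_zero]
    exact (Submodule.mem_bot ℂ).2 (funext fun i => key i i.2)
  rw [this, finrank_bot]

lemma finrank_closed_chain_of_injective (M : V →ₗ[ℂ] W) {N : V →ₗ[ℂ] W} (k : ℕ)
    (hN : Function.Injective N) : Module.finrank ℂ (chain True M N k) = 0 := by
  have : chain True M N k = ⊥ := by
    rw [eq_bot_iff]
    rintro x ⟨-, h2, h3⟩
    have key : ∀ (r i : ℕ) (hi : i < k), i + r + 1 = k → x ⟨i, hi⟩ = 0 := by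
      intro r
      induction r with
      | zero => exact fun i hi hk => hN (by rw [h3 trivial ⟨i, hi⟩ hk, map_zero])
      | succ r ih =>
        intro i hi hk
        refine hN ?_
        rw [← h2 ⟨i, hi⟩ ⟨i + 1, by omega⟩ rfl, ih (i + 1) (by omega) (by omega), map_zero,
          map_zero]
    exact (Submodule.mem_bot ℂ).2 (funext fun i => key (k - 1 - i) i i.2 (by omega))
  rw [this, finrank_bot]

/-- If `M` is onto, every open chain extends, so the number of parameters is linear in the
length: open chains are the kernel of the surjection `x ↦ (M x_i - N x_{i-1})_i`. -/
lemma finrank_open_chain_of_surjective [Module.Finite ℂ V] [Module.Finite ℂ W]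
    {M : V →ₗ[ℂ] W} (N : V →ₗ[ℂ] W) (k : ℕ) (hM : Function.Surjective M) :
    Module.finrank ℂ (chain False M N k) + k * Module.finrank ℂ W = k * Module.finrank ℂ V := by
  let T : (Fin k → V) →ₗ[ℂ] (Fin k → W) :=
    { toFun := fun x i => M (x i) - if (i : ℕ) = 0 then 0 else N (x ⟨i - 1, by omega⟩)
      map_add' := fun x y => by
        funext i
        by_cases h : (i : ℕ) = 0
        · simp [h]
        · simp only [h, if_false, Pi.add_apply, map_add]; abel
      map_smul' := fun c x => by
        funext i
        by_cases h : (i : ℕ) = 0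
        · simp [h]
        · simp only [h, if_false, Pi.smul_apply, map_smul, RingHom.id_apply, smul_sub] }
  have hT : Function.Surjective T := by
    intro y
    -- Solve `M x_i = N x_{i-1} + y_i` recursively with a section `s` of `M`.
    choose s hs using hM
    let y' : ℕ → W := fun i => if h : i < k then y ⟨i, h⟩ else 0
    let x : ℕ → V := fun i => Nat.rec (s (y' 0)) (fun i v => s (N v + y' (i + 1))) i
    refine ⟨fun i => x i, funext fun i => ?_⟩
    obtain ⟨i, hi⟩ := i
    cases i with
    | zero => simp [T, x, hs, y', hi]
    | succ i => simp [T, x, hs, y', hi]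
  have hker : chain False M N k = LinearMap.ker T := by
    ext x
    rw [mem_chain, LinearMap.mem_ker]
    constructor
    · rintro ⟨h1, h2, -⟩
      funext i
      by_cases h : (i : ℕ) = 0
      · simp [T, h, h1 i h]
      · simp [T, h, h2 ⟨i - 1, by omega⟩ i (by simp; omega)]
    · intro h
      refine ⟨fun i hi => ?_, fun i j hij => ?_, fun hc => hc.elim⟩
      · simpa [T, hi] using congrFun h i
      · have := congrFun h j
        simpa [T, hij, sub_eq_zero] using this
  have := LinearMap.finrank_range_add_finrank_ker T
  rw [LinearMap.range_eq_top.2 hT, finrank_top, ← hker] at this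
  simp only [Module.finrank_pi_fintype, Finset.sum_const, Finset.card_univ, Fintype.card_fin,
    smul_eq_mul] at this
  omega

end Chains

/-! ### Chains of the canonical blocks -/

lemma Jmat_zero_mulVec (c : ℕ) (x : Fin c → ℂ) (j : Fin c) :
    (Jmat c 0 *ᵥ x) j = if h : (j : ℕ) + 1 < c then x ⟨j + 1, h⟩ else 0 := by
  rw [Matrix.mulVec, dotProduct]
  split_ifs with h
  · rw [Finset.sum_eq_single ⟨j + 1, h⟩]
    · simp [Jmat]
    · intro b _ hb
      have : (b : ℕ) ≠ j + 1 := fun h' => hb (Fin.ext h')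
      simp [Jmat, this]
    · simp
  · refine Finset.sum_eq_zero fun b _ => ?_
    have : (b : ℕ) ≠ j + 1 := by omega
    simp [Jmat, this]

lemma Fmat_mulVec (h : ℕ) (x : Fin (h + 1) → ℂ) (j : Fin h) : (Fmat h *ᵥ x) j = x j.succ := by
  rw [Matrix.mulVec, dotProduct, Finset.sum_eq_single j.succ]
  · simp [Fmat]
  · intro b _ hb
    have : (b : ℕ) ≠ j + 1 := fun h' => hb (Fin.ext h')
    simp [Fmat, this]
  · simp

lemma Gmat_mulVec (h : ℕ) (x : Fin (h + 1) → ℂ) (j : Fin h) :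
    (Gmat h *ᵥ x) j = x j.castSucc := by
  rw [Matrix.mulVec, dotProduct, Finset.sum_eq_single j.castSucc]
  · simp [Gmat]
  · intro b _ hb
    have : (b : ℕ) ≠ j := fun h' => hb (Fin.ext h')
    simp [Gmat, this]
  · simp

/-- An open chain of `(J_c(0), 1)` is constant along the diagonals `i - j = d` of the array
`x_i(j)`, and vanishes on all of them except those meeting the last vector `x_{k-1}` in one of its
first `min k c` coordinates. -/
lemma finrank_chain_jordan (c k : ℕ) :
    Module.finrank ℂ (chain False (Jmat c 0).mulVecLin
      (1 : Matrix (Fin c) (Fin c) ℂ).mulVecLin k) = min k c := by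
  let ψ : chain False (Jmat c 0).mulVecLin (1 : Matrix (Fin c) (Fin c) ℂ).mulVecLin k →ₗ[ℂ]
      (Fin (min k c) → ℂ) :=
    { toFun := fun x t => x.1 ⟨k - 1, by have := t.2; omega⟩ ⟨t, by have := t.2; omega⟩
      map_add' := fun _ _ => rfl
      map_smul' := fun _ _ => rfl }
  have hψ : Function.Bijective ψ := by
    constructor
    · rw [← LinearMap.ker_eq_bot, eq_bot_iff]
      rintro ⟨x, h1, h2, _⟩ hx
      rw [Submodule.mem_bot, Subtype.ext_iff]
      rw [LinearMap.mem_ker] at hx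
      -- Extending the array by zero turns the boundary conditions at `j = c - 1` into the diagonal
      -- relation `hXs`.
      let X : ℕ → ℕ → ℂ := fun i j => if h : i < k ∧ j < c then x ⟨i, h.1⟩ ⟨j, h.2⟩ else 0
      have hX0 : ∀ j, X 0 (j + 1) = 0 := by
        intro j
        by_cases h : 0 < k ∧ j + 1 < c
        · have := congrFun (h1 ⟨0, h.1⟩ rfl) ⟨j, by omega⟩
          rw [Matrix.mulVecLin_apply, Jmat_zero_mulVec] at this
          simpa [X, h] using this
        · simp only [X, dif_neg h]
      have hXs : ∀ i j, i + 1 < k → X (i + 1) (j + 1) = X i j := by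
        intro i j hi
        by_cases hj : j < c
        · have := congrFun (h2 ⟨i, by omega⟩ ⟨i + 1, hi⟩ rfl) ⟨j, hj⟩
          rw [Matrix.mulVecLin_apply, Jmat_zero_mulVec] at this
          simp only [Matrix.mulVecLin_apply, Matrix.one_mulVec] at this
          have hik : i < k := by omega
          simp only [X, hik, hj, hi, true_and, and_self, dite_true]
          exact this
        · have hj' : ¬ (j + 1 < c) := by omega
          simp [X, hj, hj']
      have hXr : ∀ r i j, i + r < k → X (i + r) (j + r) = X i j := by
        intro r
        induction r with
        | zero => intros; rfl
        | succ r ih => exact fun i j h => (hXs (i + r) (j + r) h).trans (ih i j (by omega))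
      have hlast : ∀ t, t < k → X (k - 1) t = 0 := by
        intro t ht
        by_cases htc : t < c
        · have := congrFun hx ⟨t, by omega⟩
          have hk : k - 1 < k := by omega
          simpa [ψ, X, htc, hk] using this
        · simp [X, htc]
      funext i j
      obtain ⟨i, hi⟩ := i
      obtain ⟨j, hj⟩ := j
      have hXij : X i j = x ⟨i, hi⟩ ⟨j, hj⟩ := by simp [X, hi, hj]
      change x ⟨i, hi⟩ ⟨j, hj⟩ = 0
      rw [← hXij]
      by_cases hij : j ≤ i
      · rw [← hXr (k - 1 - i) i j (by omega), show i + (k - 1 - i) = k - 1 by omega]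
        exact hlast _ (by omega)
      · have := hXr i 0 (j - i) (by omega)
        rw [show 0 + i = i by omega, show j - i + i = j by omega] at this
        rw [this, show j - i = (j - i - 1) + 1 by omega]
        exact hX0 _
    · intro a
      refine ⟨⟨fun i j => if h : (j : ℕ) + (k - 1 - i) < min k c then a ⟨_, h⟩ else 0,
        ?_, ?_, fun h => h.elim⟩, ?_⟩
      · intro i hi
        funext j
        rw [Matrix.mulVecLin_apply, Jmat_zero_mulVec]
        split_ifs with h
        · beta_reduce
          rw [dif_neg (by dsimp only; omega)]
          rfl
        · rfl
      · intro i i' hii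
        funext j
        rw [Matrix.mulVecLin_apply, Jmat_zero_mulVec, Matrix.mulVecLin_apply, Matrix.one_mulVec]
        have e : (j : ℕ) + 1 + (k - 1 - i') = j + (k - 1 - i) := by omega
        by_cases h : (j : ℕ) + 1 < c
        · simp only [h, dite_true, e]
        · beta_reduce
          rw [dif_neg h, dif_neg (by omega)]
      · funext t
        simp [ψ]
        intro h
        omega
  rw [(LinearEquiv.ofBijective ψ hψ).finrank_eq, Module.finrank_pi, Fintype.card_fin]

/-- A closed chain of `(F_h, G_h)` is constant along the diagonals `i - j = d` of the array
`x_i(j)`, and only the diagonals `0 ≤ d < k - h` are free; these are read off at `j = 0`. -/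
lemma finrank_chain_horiz (h k : ℕ) :
    Module.finrank ℂ (chain True (Fmat h).mulVecLin (Gmat h).mulVecLin k) = k - h := by
  let ψ : chain True (Fmat h).mulVecLin (Gmat h).mulVecLin k →ₗ[ℂ] (Fin (k - h) → ℂ) :=
    { toFun := fun x t => x.1 ⟨t, by omega⟩ 0
      map_add' := fun _ _ => rfl
      map_smul' := fun _ _ => rfl }
  have hψ : Function.Bijective ψ := by
    constructor
    · rw [← LinearMap.ker_eq_bot, eq_bot_iff]
      rintro ⟨x, h1, h2, h3⟩ hx
      rw [Submodule.mem_bot, Subtype.ext_iff]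
      rw [LinearMap.mem_ker] at hx
      have hX0 : ∀ j (hk : 0 < k) (hj : j < h), x ⟨0, hk⟩ ⟨j + 1, by omega⟩ = 0 := by
        intro j hk hj
        have := congrFun (h1 ⟨0, hk⟩ rfl) ⟨j, hj⟩
        rwa [Matrix.mulVecLin_apply, Fmat_mulVec] at this
      have hXs : ∀ i j (hi : i + 1 < k) (hj : j < h),
          x ⟨i + 1, hi⟩ ⟨j + 1, by omega⟩ = x ⟨i, by omega⟩ ⟨j, by omega⟩ := by
        intro i j hi hj
        have := congrFun (h2 ⟨i, by omega⟩ ⟨i + 1, hi⟩ rfl) ⟨j, hj⟩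
        rwa [Matrix.mulVecLin_apply, Fmat_mulVec, Matrix.mulVecLin_apply, Gmat_mulVec] at this
      have hXl : ∀ i j (hi : i < k) (hj : j < h), i + 1 = k → x ⟨i, hi⟩ ⟨j, by omega⟩ = 0 := by
        intro i j hi hj hk
        have := congrFun (h3 trivial ⟨i, hi⟩ hk) ⟨j, hj⟩
        rwa [Matrix.mulVecLin_apply, Gmat_mulVec] at this
      have hXt : ∀ r i j (hi : i < k) (hj : j < h), j + r < h → i + r + 1 = k →
          x ⟨i, hi⟩ ⟨j, by omega⟩ = 0 := by
        intro r
        induction r with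
        | zero => exact fun i j hi hj hjr hk => hXl i j hi hj hk
        | succ r ih =>
          intro i j hi hj hjr hk
          rw [← hXs i j (by omega) hj]
          exact ih (i + 1) (j + 1) (by omega) (by omega) (by omega) (by omega)
      have hcol : ∀ i (hi : i < k), x ⟨i, hi⟩ 0 = 0 := by
        intro i hi
        by_cases hik : i < k - h
        · exact congrFun hx ⟨i, hik⟩
        · exact hXt (k - 1 - i) i 0 hi (by omega) (by omega) (by omega)
      have key : ∀ i j (hi : i < k) (hj : j < h + 1), x ⟨i, hi⟩ ⟨j, hj⟩ = 0 := by
        intro i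
        induction i with
        | zero =>
          intro j hi hj
          cases j with
          | zero => exact hcol 0 hi
          | succ j => exact hX0 j hi (by omega)
        | succ i ih =>
          intro j hi hj
          cases j with
          | zero => exact hcol _ hi
          | succ j => rw [hXs i j hi (by omega)]; exact ih j _ _
      exact funext fun i => funext fun j => key i j i.2 j.2
    · intro a
      refine ⟨⟨fun i j => if hh : (j : ℕ) ≤ i ∧ (i : ℕ) - j < k - h then a ⟨_, hh.2⟩ else 0,
        ?_, ?_, ?_⟩, ?_⟩
      · intro i hi
        funext j
        rw [Matrix.mulVecLin_apply, Fmat_mulVec]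
        beta_reduce
        rw [dif_neg (by simp only [Fin.val_succ]; omega)]
        rfl
      · intro i i' hii
        funext j
        rw [Matrix.mulVecLin_apply, Fmat_mulVec, Matrix.mulVecLin_apply, Gmat_mulVec]
        have e : (i' : ℕ) - j.succ = i - j := by simp; omega
        have e' : (j.succ : ℕ) ≤ i' ↔ (j : ℕ) ≤ i := by simp; omega
        simp only [e, e', Fin.val_castSucc]
      · intro _ i hi
        funext j
        rw [Matrix.mulVecLin_apply, Gmat_mulVec]
        beta_reduce
        rw [dif_neg (by simp only [Fin.val_castSucc]; omega)]
        rfl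
      · funext t
        simp [ψ]
  rw [(LinearEquiv.ofBijective ψ hψ).finrank_eq, Module.finrank_pi, Fintype.card_fin]

/-- The matrix whose kernel detects the eigenvalue `p ∈ ℂ ∪ {∞}`: `A - μB` for `p = μ`, and `B`
for `p = ∞`. -/
def evalM {ι κ : Type*} (p : Option ℂ) (A B : Matrix ι κ ℂ) : Matrix ι κ ℂ :=
  match p with
  | some μ => A - μ • B
  | none => B

/-- The companion of `evalM` in the chain recursion: `B` at a finite point, `A` at `∞`. -/
def evalN {ι κ : Type*} (p : Option ℂ) (A B : Matrix ι κ ℂ) : Matrix ι κ ℂ :=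
  match p with
  | some _ => B
  | none => A

lemma horiz_surjective (h : ℕ) (p : Option ℂ) :
    Function.Surjective (evalM p (Fmat h) (Gmat h)).mulVecLin := by
  intro y
  cases p with
  | none =>
    refine ⟨fun j => if hj : (j : ℕ) < h then y ⟨j, hj⟩ else 0, funext fun j => ?_⟩
    simp [evalM, Gmat_mulVec]
  | some μ =>
    -- Start with `x₀ = 0` and solve `x_{j+1} - μ x_j = y_j` recursively.
    let y' : ℕ → ℂ := fun i => if hi : i < h then y ⟨i, hi⟩ else 0
    let x : ℕ → ℂ := fun i => Nat.rec 0 (fun i v => μ * v + y' i) i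
    refine ⟨fun j => x j, funext fun j => ?_⟩
    simp [evalM, Gmat_mulVec, Fmat_mulVec, x, y']

lemma injective_transpose_of_surjective {ι κ : Type*} [Fintype ι] [Fintype κ]
    (M : Matrix ι κ ℂ) (hM : Function.Surjective M.mulVecLin) :
    Function.Injective Mᵀ.mulVecLin := by
  rw [← LinearMap.ker_eq_bot, eq_bot_iff]
  intro x hx
  rw [LinearMap.mem_ker, Matrix.mulVecLin_apply, Matrix.mulVec_transpose] at hx
  rw [Submodule.mem_bot]
  refine dotProduct_eq_zero x fun w => ?_
  obtain ⟨v, rfl⟩ := hM w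
  rw [Matrix.mulVecLin_apply, Matrix.dotProduct_mulVec, hx, zero_dotProduct]

lemma evalM_transpose {ι κ : Type*} (p : Option ℂ) (A B : Matrix ι κ ℂ) :
    evalM p Aᵀ Bᵀ = (evalM p A B)ᵀ := by
  cases p <;> simp [evalM]

lemma injective_of_upper {c : ℕ} (M : Matrix (Fin c) (Fin c) ℂ) (hM : M.IsUpperTriangular)
    (hd : ∀ i, M i i ≠ 0) : Function.Injective M.mulVecLin := by
  have : IsUnit M := by
    rw [Matrix.isUnit_iff_isUnit_det, Matrix.det_of_isUpperTriangular hM, isUnit_iff_ne_zero]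
    exact Finset.prod_ne_zero_iff.2 fun i _ => hd i
  exact Matrix.mulVec_injective_iff_isUnit.2 this

lemma injective_one (c : ℕ) : Function.Injective (1 : Matrix (Fin c) (Fin c) ℂ).mulVecLin := by
  rw [Matrix.mulVecLin_one]; exact Function.injective_id

lemma jordan_injective (c : ℕ) (p q : Option ℂ) (hpq : p ≠ q) :
    Function.Injective (evalM p (CanBlockData.jordan c q).Amat
      (CanBlockData.jordan c q).Bmat).mulVecLin := by
  cases p with
  | none =>
    cases q with
    | none => exact absurd rfl hpq
    | some ν => exact injective_one c
  | some μ =>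
    cases q with
    | none =>
      have h : Function.Injective (1 - μ • Jmat c 0 : Matrix (Fin c) (Fin c) ℂ).mulVecLin := by
        refine injective_of_upper _ (fun i j hij => ?_) fun i => ?_
        · have hij : (j : ℕ) < i := hij
          have h1 : (j : ℕ) ≠ i := by omega
          have h2 : (j : ℕ) ≠ i + 1 := by omega
          have h3 : i ≠ j := fun h => h1 (congrArg _ h.symm)
          simp [Jmat, h2, h3]
        · simp [Jmat]
      exact h
    | some ν =>
      have h : Function.Injective (Jmat c ν - μ • 1 : Matrix (Fin c) (Fin c) ℂ).mulVecLin := by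
        refine injective_of_upper _ (fun i j hij => ?_) fun i => ?_
        · have hij : (j : ℕ) < i := hij
          have h1 : (j : ℕ) ≠ i := by omega
          have h2 : (j : ℕ) ≠ i + 1 := by omega
          have h3 : i ≠ j := fun h => h1 (congrArg _ h.symm)
          simp [Jmat, h1, h2, h3]
        · have : ν ≠ μ := fun h => hpq (by rw [h])
          simpa [Jmat, sub_eq_zero] using this
      exact h

lemma evalM_jordan_self (c : ℕ) (p : Option ℂ) :
    evalM p (CanBlockData.jordan c p).Amat (CanBlockData.jordan c p).Bmat = Jmat c 0 := by
  cases p with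
  | none => rfl
  | some μ =>
    change Jmat c μ - μ • 1 = Jmat c 0
    ext i j
    by_cases h : i = j
    · simp [Jmat, h]
    · have : (j : ℕ) ≠ i := fun h' => h (Fin.ext h'.symm)
      simp [Jmat, h, this]

lemma evalN_jordan_self (c : ℕ) (p : Option ℂ) :
    evalN p (CanBlockData.jordan c p).Amat (CanBlockData.jordan c p).Bmat =
      (1 : Matrix (Fin c) (Fin c) ℂ) := by
  cases p <;> rfl

/-! ### The numerical invariants -/

/-- Dimension of the space of open chains of length `k` at the point `p ∈ ℂ ∪ {∞}`. -/
def nu {ι κ : Type*} [Fintype κ] (p : Option ℂ) (k : ℕ) (A B : Matrix ι κ ℂ) : ℕ :=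
  Module.finrank ℂ (chain False (evalM p A B).mulVecLin (evalN p A B).mulVecLin k)

/-- Dimension of the space of closed chains of length `k`. -/
def kap {ι κ : Type*} [Fintype κ] (k : ℕ) (A B : Matrix ι κ ℂ) : ℕ :=
  Module.finrank ℂ (chain True A.mulVecLin B.mulVecLin k)

lemma nu_jordan (c k : ℕ) (p q : Option ℂ) :
    nu p k (CanBlockData.jordan c q).Amat (CanBlockData.jordan c q).Bmat =
      if p = q then min k c else 0 := by
  split_ifs with h
  · subst h
    rw [nu, evalM_jordan_self, evalN_jordan_self]
    exact finrank_chain_jordan c k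
  · exact finrank_chain_of_injective _ _ _ (jordan_injective c p q h)

lemma nu_horiz (h k : ℕ) (p : Option ℂ) :
    nu p k (CanBlockData.horiz h).Amat (CanBlockData.horiz h).Bmat = k := by
  have := finrank_open_chain_of_surjective (evalN p (Fmat h) (Gmat h)).mulVecLin k
    (horiz_surjective h p)
  simp only [Module.finrank_pi, Fintype.card_fin, mul_add, mul_one] at this
  change Module.finrank ℂ (chain False (evalM p (Fmat h) (Gmat h)).mulVecLin
    (evalN p (Fmat h) (Gmat h)).mulVecLin k) = k
  omega

lemma nu_vert (w k : ℕ) (p : Option ℂ) :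
    nu p k (CanBlockData.vert w).Amat (CanBlockData.vert w).Bmat = 0 := by
  refine finrank_chain_of_injective _ _ _ ?_
  change Function.Injective (evalM p (Fmat w)ᵀ (Gmat w)ᵀ).mulVecLin
  rw [evalM_transpose]
  exact injective_transpose_of_surjective _ (horiz_surjective w p)

lemma Fmat_transpose_injective (w : ℕ) : Function.Injective (Fmat w)ᵀ.mulVecLin := by
  refine injective_transpose_of_surjective _ ?_
  simpa [evalM] using horiz_surjective w (some 0)

lemma kap_jordan (c k : ℕ) (q : Option ℂ) :
    kap k (CanBlockData.jordan c q).Amat (CanBlockData.jordan c q).Bmat = 0 := by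
  cases q with
  | none => exact finrank_chain_of_injective _ _ _ (injective_one c)
  | some μ => exact finrank_closed_chain_of_injective _ _ (injective_one c)

lemma kap_horiz (h k : ℕ) :
    kap k (CanBlockData.horiz h).Amat (CanBlockData.horiz h).Bmat = k - h :=
  finrank_chain_horiz h k

lemma kap_vert (w k : ℕ) :
    kap k (CanBlockData.vert w).Amat (CanBlockData.vert w).Bmat = 0 :=
  finrank_chain_of_injective _ _ _ (Fmat_transpose_injective w)

lemma kapT_jordan (c k : ℕ) (q : Option ℂ) :
    kap k (CanBlockData.jordan c q).Amatᵀ (CanBlockData.jordan c q).Bmatᵀ = 0 := by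
  cases q with
  | none =>
    refine finrank_chain_of_injective _ _ _ ?_
    change Function.Injective (1 : Matrix (Fin c) (Fin c) ℂ)ᵀ.mulVecLin
    rw [Matrix.transpose_one]
    exact injective_one c
  | some μ =>
    refine finrank_closed_chain_of_injective _ _ ?_
    change Function.Injective (1 : Matrix (Fin c) (Fin c) ℂ)ᵀ.mulVecLin
    rw [Matrix.transpose_one]
    exact injective_one c

lemma kapT_horiz (h k : ℕ) :
    kap k (CanBlockData.horiz h).Amatᵀ (CanBlockData.horiz h).Bmatᵀ = 0 :=
  finrank_chain_of_injective _ _ _ (Fmat_transpose_injective h)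

lemma kapT_vert (w k : ℕ) :
    kap k (CanBlockData.vert w).Amatᵀ (CanBlockData.vert w).Bmatᵀ = k - w :=
  finrank_chain_horiz w k

/-! ### Additivity and invariance -/

lemma blockDiagonal'_mulVec {ι : Type*} [Fintype ι] [DecidableEq ι] {r s : ι → ℕ}
    (M : ∀ i, Matrix (Fin (r i)) (Fin (s i)) ℂ) (x : (Σ i, Fin (s i)) → ℂ) (i : ι)
    (a : Fin (r i)) :
    (Matrix.blockDiagonal' M *ᵥ x) ⟨i, a⟩ = (M i *ᵥ fun b => x ⟨i, b⟩) a := by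
  simp only [Matrix.mulVec, dotProduct, Fintype.sum_sigma]
  rw [Finset.sum_eq_single i]
  · simp [Matrix.blockDiagonal'_apply_eq]
  · intro j _ hj
    exact Finset.sum_eq_zero fun b _ => by
      rw [Matrix.blockDiagonal'_apply_ne _ _ _ hj.symm, zero_mul]
  · simp

lemma finrank_chain_blockDiagonal' {ι : Type*} [Fintype ι] [DecidableEq ι] {r s : ι → ℕ}
    (cl : Prop) (k : ℕ) (M N : ∀ i, Matrix (Fin (r i)) (Fin (s i)) ℂ) :
    Module.finrank ℂ (chain cl (Matrix.blockDiagonal' M).mulVecLin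
      (Matrix.blockDiagonal' N).mulVecLin k) =
      ∑ i, Module.finrank ℂ (chain cl (M i).mulVecLin (N i).mulVecLin k) := by
  rw [← finrank_chain_pi cl (fun i => (M i).mulVecLin) (fun i => (N i).mulVecLin) k]
  refine finrank_chain_equiv cl k (LinearEquiv.piCurry ℂ fun i (_ : Fin (s i)) => ℂ)
    (LinearEquiv.piCurry ℂ fun i (_ : Fin (r i)) => ℂ) ?_ ?_ <;>
  · intro x
    funext i a
    exact (blockDiagonal'_mulVec _ x i a).symm

lemma finrank_chain_reindex {ι κ : Type*} [Fintype ι] [Fintype κ] {m n : ℕ} (cl : Prop) (k : ℕ)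
    (er : ι ≃ Fin m) (ec : κ ≃ Fin n) (M N : Matrix ι κ ℂ) :
    Module.finrank ℂ (chain cl M.mulVecLin N.mulVecLin k) =
      Module.finrank ℂ (chain cl (Matrix.reindex er ec M).mulVecLin
        (Matrix.reindex er ec N).mulVecLin k) := by
  refine finrank_chain_equiv cl k (LinearEquiv.funCongrLeft ℂ ℂ ec.symm)
    (LinearEquiv.funCongrLeft ℂ ℂ er.symm) ?_ ?_ <;>
  · intro x
    funext i
    simp only [Matrix.mulVecLin_apply, Matrix.mulVec, dotProduct, LinearEquiv.funCongrLeft_apply,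
      LinearMap.funLeft_apply, Matrix.reindex_apply, Matrix.submatrix_apply]
    exact Equiv.sum_comp ec.symm fun j => _ * x j

lemma finrank_chain_strictEquiv {ι κ ι' κ' : Type*} [Fintype ι] [Fintype κ] [Fintype ι']
    [Fintype κ'] {m n : ℕ} (cl : Prop) (k : ℕ) (er : ι ≃ Fin m) (ec : κ ≃ Fin n)
    (er' : ι' ≃ Fin m) (ec' : κ' ≃ Fin n) (P : Matrix (Fin m) (Fin m) ℂ)
    (Q : Matrix (Fin n) (Fin n) ℂ) (hP : IsUnit P.det) (hQ : IsUnit Q.det)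
    (M N : Matrix ι κ ℂ) (M' N' : Matrix ι' κ' ℂ)
    (hM : P * Matrix.reindex er ec M * Q = Matrix.reindex er' ec' M')
    (hN : P * Matrix.reindex er ec N * Q = Matrix.reindex er' ec' N') :
    Module.finrank ℂ (chain cl M.mulVecLin N.mulVecLin k) =
      Module.finrank ℂ (chain cl M'.mulVecLin N'.mulVecLin k) := by
  rw [finrank_chain_reindex cl k er ec, finrank_chain_reindex cl k er' ec', ← hM, ← hN]
  have : Invertible Q := Matrix.invertibleOfIsUnitDet Q hQ
  have : Invertible P := Matrix.invertibleOfIsUnitDet P hP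
  have hl : ∀ {l : ℕ} (R : Matrix (Fin l) (Fin l) ℂ) (hR : Invertible R) (x : Fin l → ℂ),
      R.toLinearEquiv' hR x = R *ᵥ x := fun _ _ _ => rfl
  refine (finrank_chain_equiv cl k (Matrix.toLinearEquiv' Q ‹_›)
    (Matrix.toLinearEquiv' P⁻¹ inferInstance) ?_ ?_).symm <;>
  · intro x
    rw [hl, hl]
    simp [Matrix.mulVec_mulVec, Matrix.mul_assoc]

lemma evalM_blockDiagonal' {ι : Type*} [DecidableEq ι] {r s : ι → ℕ} (p : Option ℂ)
    (A B : ∀ i, Matrix (Fin (r i)) (Fin (s i)) ℂ) :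
    evalM p (Matrix.blockDiagonal' A) (Matrix.blockDiagonal' B) =
      Matrix.blockDiagonal' fun i => evalM p (A i) (B i) := by
  cases p with
  | none => rfl
  | some μ =>
    rw [show (fun i => evalM (some μ) (A i) (B i)) = A - μ • B from rfl,
      Matrix.blockDiagonal'_sub, Matrix.blockDiagonal'_smul]
    rfl

lemma evalN_blockDiagonal' {ι : Type*} [DecidableEq ι] {r s : ι → ℕ} (p : Option ℂ)
    (A B : ∀ i, Matrix (Fin (r i)) (Fin (s i)) ℂ) :
    evalN p (Matrix.blockDiagonal' A) (Matrix.blockDiagonal' B) =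
      Matrix.blockDiagonal' fun i => evalN p (A i) (B i) := by
  cases p <;> rfl

/-! ### Recovering the multiplicities -/

open Classical in
/-- `k ↦ min k c` has a single kink, at `k = c`, so its second difference isolates the size `c`. -/
lemma ite_jordan (k : ℕ) (hk : 1 ≤ k) (p : Option ℂ) (b : CanBlockData) :
    (if b = .jordan k p then 1 else 0 : ℤ) =
      2 * (nu p k b.Amat b.Bmat : ℤ) - nu p (k - 1) b.Amat b.Bmat - nu p (k + 1) b.Amat b.Bmat := by
  cases b with
  | jordan c q =>
    simp only [nu_jordan, CanBlockData.jordan.injEq]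
    by_cases h : p = q
    · subst h
      simp only [if_true, and_true]
      split_ifs <;> omega
    · simp [h, Ne.symm h]
  | horiz h => simp only [nu_horiz, reduceCtorEq, if_false]; omega
  | vert w => simp [nu_vert]

open Classical in
/-- On `L_{h'}` the closed chains of length `k` have dimension `max (k - h') 0`, whose second
difference at `k = h` is `1` exactly when `h = h'`. For `h = 0` the truncation `h - 1 = 0` is
harmless, as there are no nonzero chains of length `0`. -/
lemma ite_horiz (h : ℕ) (b : CanBlockData) :
    (if b = .horiz h then 1 else 0 : ℤ) =
      (kap (h + 1) b.Amat b.Bmat : ℤ) - 2 * kap h b.Amat b.Bmat + kap (h - 1) b.Amat b.Bmat := by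
  cases b with
  | jordan c q => simp [kap_jordan]
  | horiz h' =>
    simp only [kap_horiz, CanBlockData.horiz.injEq]
    split_ifs <;> omega
  | vert w => simp [kap_vert]

open Classical in
lemma ite_vert (w : ℕ) (b : CanBlockData) :
    (if b = .vert w then 1 else 0 : ℤ) =
      (kap (w + 1) b.Amatᵀ b.Bmatᵀ : ℤ) - 2 * kap w b.Amatᵀ b.Bmatᵀ +
        kap (w - 1) b.Amatᵀ b.Bmatᵀ := by
  cases b with
  | jordan c q => simp [kapT_jordan]
  | horiz h => simp [kapT_horiz]
  | vert w' =>
    simp only [kapT_vert, CanBlockData.vert.injEq]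
    split_ifs <;> omega

/-- Kronecker Canonical Form, uniqueness: if two block-diagonal pencils of
canonical blocks are strictly equivalent, then their block data coincide up to
a permutation of the blocks (equivalently, the multiset of pairs `(μ, c)` of
Jordan blocks, the multiset of widths of horizontal Kronecker blocks and the
multiset of heights of vertical Kronecker blocks coincide). -/
theorem kronecker_canonical_form_uniqueness
    (m n N₁ N₂ : ℕ)
    (bl₁ : Fin N₁ → CanBlockData) (bl₂ : Fin N₂ → CanBlockData)
    (h₁ : ∀ i, (bl₁ i).ok) (h₂ : ∀ i, (bl₂ i).ok)
    (er₁ : (Σ i, Fin ((bl₁ i).rows)) ≃ Fin m)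
    (ec₁ : (Σ i, Fin ((bl₁ i).cols)) ≃ Fin n)
    (er₂ : (Σ i, Fin ((bl₂ i).rows)) ≃ Fin m)
    (ec₂ : (Σ i, Fin ((bl₂ i).cols)) ≃ Fin n)
    (P : Matrix (Fin m) (Fin m) ℂ) (Q : Matrix (Fin n) (Fin n) ℂ)
    (hP : IsUnit P.det) (hQ : IsUnit Q.det)
    (hA : P * Matrix.reindex er₁ ec₁ (Matrix.blockDiagonal' fun i => (bl₁ i).Amat) * Q =
      Matrix.reindex er₂ ec₂ (Matrix.blockDiagonal' fun i => (bl₂ i).Amat))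
    (hB : P * Matrix.reindex er₁ ec₁ (Matrix.blockDiagonal' fun i => (bl₁ i).Bmat) * Q =
      Matrix.reindex er₂ ec₂ (Matrix.blockDiagonal' fun i => (bl₂ i).Bmat)) :
    ∃ σ : Fin N₁ ≃ Fin N₂, ∀ i, bl₂ (σ i) = bl₁ i := by
  classical
  have hnu : ∀ p k, ∑ i, nu p k (bl₁ i).Amat (bl₁ i).Bmat =
      ∑ i, nu p k (bl₂ i).Amat (bl₂ i).Bmat := by
    intro p k
    have h := finrank_chain_strictEquiv False k er₁ ec₁ er₂ ec₂ P Q hP hQ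
      (evalM p (Matrix.blockDiagonal' fun i => (bl₁ i).Amat)
        (Matrix.blockDiagonal' fun i => (bl₁ i).Bmat))
      (evalN p (Matrix.blockDiagonal' fun i => (bl₁ i).Amat)
        (Matrix.blockDiagonal' fun i => (bl₁ i).Bmat))
      (evalM p (Matrix.blockDiagonal' fun i => (bl₂ i).Amat)
        (Matrix.blockDiagonal' fun i => (bl₂ i).Bmat))
      (evalN p (Matrix.blockDiagonal' fun i => (bl₂ i).Amat)
        (Matrix.blockDiagonal' fun i => (bl₂ i).Bmat)) ?_ ?_
    · rw [evalM_blockDiagonal', evalN_blockDiagonal', evalM_blockDiagonal', evalN_blockDiagonal',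
        finrank_chain_blockDiagonal', finrank_chain_blockDiagonal'] at h
      exact h
    · cases p with
      | none => exact hB
      | some μ =>
        simp only [Matrix.reindex_apply] at hA hB
        simp only [evalM, Matrix.reindex_apply, Matrix.submatrix_sub, Matrix.submatrix_smul,
          Pi.sub_apply, Pi.smul_apply, Matrix.mul_sub, Matrix.sub_mul, Matrix.mul_smul,
          Matrix.smul_mul, hA, hB]
    · cases p with
      | none => exact hA
      | some μ => exact hB
  have hkap : ∀ k, ∑ i, kap k (bl₁ i).Amat (bl₁ i).Bmat =
      ∑ i, kap k (bl₂ i).Amat (bl₂ i).Bmat := by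
    intro k
    have h := finrank_chain_strictEquiv True k er₁ ec₁ er₂ ec₂ P Q hP hQ _ _ _ _ hA hB
    simp only [finrank_chain_blockDiagonal'] at h
    exact h
  have hkapT : ∀ k, ∑ i, kap k (bl₁ i).Amatᵀ (bl₁ i).Bmatᵀ =
      ∑ i, kap k (bl₂ i).Amatᵀ (bl₂ i).Bmatᵀ := by
    intro k
    have hA' := congrArg Matrix.transpose hA
    have hB' := congrArg Matrix.transpose hB
    simp only [Matrix.transpose_mul, Matrix.transpose_reindex, ← Matrix.mul_assoc,
      Matrix.blockDiagonal'_transpose] at hA' hB'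
    have h := finrank_chain_strictEquiv True k ec₁ er₁ ec₂ er₂ Qᵀ Pᵀ
      (by rwa [Matrix.det_transpose]) (by rwa [Matrix.det_transpose]) _ _ _ _ hA' hB'
    simp only [finrank_chain_blockDiagonal'] at h
    exact h
  have hcount : ∀ b : CanBlockData, (∑ i, if bl₁ i = b then 1 else 0 : ℤ) =
      ∑ i, if bl₂ i = b then 1 else 0 := by
    intro b
    cases b with
    | jordan k p =>
      by_cases hk : 1 ≤ k
      · simp only [ite_jordan k hk, Finset.sum_sub_distrib, ← Finset.mul_sum]
        exact_mod_cast by rw [hnu, hnu, hnu]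
      · have e₁ : ∀ i, bl₁ i ≠ .jordan k p := fun i h => hk (by simpa [h, CanBlockData.ok] using h₁ i)
        have e₂ : ∀ i, bl₂ i ≠ .jordan k p := fun i h => hk (by simpa [h, CanBlockData.ok] using h₂ i)
        simp [e₁, e₂]
    | horiz h =>
      simp only [ite_horiz, Finset.sum_sub_distrib, Finset.sum_add_distrib, ← Finset.mul_sum]
      exact_mod_cast by rw [hkap, hkap, hkap]
    | vert w =>
      simp only [ite_vert, Finset.sum_sub_distrib, Finset.sum_add_distrib, ← Finset.mul_sum]
      exact_mod_cast by rw [hkapT, hkapT, hkapT]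
  have hcard : ∀ b, Fintype.card {i // bl₁ i = b} = Fintype.card {i // bl₂ i = b} := by
    intro b
    have := hcount b
    rw [Finset.sum_boole, Finset.sum_boole] at this
    rw [Fintype.card_subtype, Fintype.card_subtype]
    exact_mod_cast this
  exact ⟨Equiv.ofFiberEquiv fun b => Fintype.equivOfCardEq (hcard b),
    fun i => Equiv.ofFiberEquiv_map _ i⟩

end
end
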